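/- arXiv:2301.09101 — 3 statements merged into one kernel-verified Lean document; each statement's English description precedes it below -/
import Mathlib

section
/- Let p be an odd prime and G₂ a special p-group with center of order p³, |G₂| ≥ p^{13}, d(G₂) = d, and suppose additionally that G₂^p = γ₂(G₂). Then |M(G₂)| ≤ p^{(1/2)d(d-1) − 2}. -/
/-- The Schur multiplier of a group `G`: the second cohomology group `H²(G, ℂˣ)`
of `G` with coefficients in `ℂˣ` (with trivial `G`-action), as in the paper. -/
noncomputable def schurMultiplier (G : Type) [Group G] : Type :=
  groupCohomology (Rep.trivial ℤ G (Additive ℂˣ)) 2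

/-!
Write `H = F / [F, R]` for a free presentation `G = F / R`, so that `π : H → G` has central kernel.
Transgression embeds `H²(G, ℂˣ)` into the characters of `ker π ∩ H'`, and
`|H'| = |ker π ∩ H'| * p ^ 3`; hence it suffices that `|H'|` divides `p * p ^ (d.choose 2)`.

Put `N = [H, π⁻¹(G')]`, a central subgroup of `H`. The quotient `H / N` is a central extension of
the elementary abelian group `G / G'`, of rank at most `d`, so its commutator subgroup is a quotient
of the exterior square of `G / G'`. It remains to see that `N` has order at most `p`.

Commutation in `H` is a bilinear map `b : G / G' × G' → N` whose values span `N`. Let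
`f : G / G' → G'` be the `p`-th power map, which is linear because `p` is odd and onto by
hypothesis, and `c : G / G' × G' / G' → G'` the commutator map. Then `b (x, f x) = 0`, so that `b`
comes from an alternating map `B` on the three-dimensional space `G'`, and the Hall–Witt identity
says that `b (x, c (y, z))` has vanishing cyclic sum. If `c (x, y) ≠ 0` for some `x`, `y` in
`ker f`, that identity puts `c (x, y)` in the radical of `B`, so that `N` is a quotient of the
exterior square of a plane. If `c` vanishes on `ker f` and `B ≠ 0`, then each `x` in `ker f` acts
on `G'` through `f y ↦ c (x, y)`, faithfully and skew-adjointly for a nonzero alternating form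
`l ∘ B`. Such endomorphisms form a space of dimension at most `6`, whence `dim G / G' ≤ 9`,
contradicting `|G| ≥ p ^ 13`.
-/

namespace SchurBound

open scoped commutatorElement IsMulCommutative

/-- The second term of the lower central series, in the form `⁅⊤, T⁆` used for
`commutatorPairing`. -/
local notation "γ₂(" G ")" => ⁅(⊤ : Subgroup G), (⊤ : Subgroup G)⁆

/-! ### Alternating bilinear maps -/

section BilinearMaps

open Module

section CommRing

variable {R V W N : Type*} [CommRing R] [AddCommGroup V] [Module R V] [AddCommGroup W] [Module R W]
  [AddCommGroup N] [Module R N]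

theorem finrank_le_choose_two_of_isAlt [Nontrivial R] [Module.Free R V] [Module.Finite R V]
    {B : V →ₗ[R] V →ₗ[R] N} (hB : B.IsAlt) (hspan : Submodule.map₂ B ⊤ ⊤ = ⊤) :
    finrank R N ≤ (finrank R V).choose 2 := by
  let alt : V [⋀^Fin 2]→ₗ[R] N :=
    { toFun := fun v => B (v 0) (v 1)
      map_update_add' := fun v i x y => by fin_cases i <;> simp
      map_update_smul' := fun v i a x => by fin_cases i <;> simp
      map_eq_zero_of_eq' := fun v i j hv hij => by
        fin_cases i <;> fin_cases j <;> simp_all [hB.self_eq_zero] }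
  let L : ⋀[R]^2 V →ₗ[R] N := exteriorPower.alternatingMapLinearEquiv alt
  have hL : Function.Surjective L := by
    rw [← LinearMap.range_eq_top, eq_top_iff, ← hspan, Submodule.map₂_le]
    rintro x - y -
    exact ⟨exteriorPower.ιMulti R 2 ![x, y],
      exteriorPower.alternatingMapLinearEquiv_apply_ιMulti alt ![x, y]⟩
  calc finrank R N ≤ finrank R (⋀[R]^2 V) := LinearMap.finrank_le_finrank_of_surjective hL
    _ = (finrank R V).choose 2 := exteriorPower.finrank_eq R 2

theorem exists_isAlt_comp_eq {f : V →ₗ[R] W} (hf : Function.Surjective f) {b : V →ₗ[R] W →ₗ[R] N}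
    (hb : ∀ x, b x (f x) = 0) : ∃ B : W →ₗ[R] W →ₗ[R] N, B.IsAlt ∧ ∀ x, B (f x) = b x := by
  have hpolar : (b.compl₂ f).IsAlt := hb
  have hker : LinearMap.ker f ≤ LinearMap.ker b := fun k hk => by
    refine LinearMap.ext fun w => ?_
    obtain ⟨y, rfl⟩ := hf w
    simpa [LinearMap.mem_ker.1 hk] using (hpolar.neg y k).symm
  let B : W →ₗ[R] W →ₗ[R] N :=
    (LinearMap.ker f).liftQ b hker ∘ₗ (f.quotKerEquivOfSurjective hf).symm
  have hBf (x : V) : B (f x) = b x := by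
    have hx : (f.quotKerEquivOfSurjective hf).symm (f x) = Submodule.Quotient.mk x :=
      (LinearEquiv.symm_apply_eq _).2 rfl
    simp [B, hx]
  refine ⟨B, fun w => ?_, hBf⟩
  obtain ⟨x, rfl⟩ := hf w
  rw [hBf, hb]

theorem finite_of_map₂_eq_top [Module.Finite R V] [Module.Finite R W] {B : V →ₗ[R] W →ₗ[R] N}
    (hspan : Submodule.map₂ B ⊤ ⊤ = ⊤) : Module.Finite R N :=
  ⟨hspan ▸ Module.Finite.fg_top.map₂ B Module.Finite.fg_top⟩

end CommRing

section Field

variable {F V W N : Type*} [Field F] [AddCommGroup V] [Module F V] [AddCommGroup W] [Module F W]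
  [AddCommGroup N] [Module F N]

theorem exists_apply_apply_eq_one {φ : V →ₗ[F] W →ₗ[F] F} (hφ : φ ≠ 0) : ∃ v w, φ v w = 1 := by
  obtain ⟨v, hv⟩ := DFunLike.ne_iff.1 hφ
  obtain ⟨w, hw⟩ := DFunLike.ne_iff.1 hv
  exact ⟨v, (φ v w)⁻¹ • w, by rw [map_smul, smul_eq_mul, inv_mul_cancel₀ hw]⟩

theorem exists_ne_zero_apply_eq_zero_of_two_lt_finrank (hW : 2 < finrank F W) (f g : W →ₗ[F] F) :
    ∃ w ≠ 0, f w = 0 ∧ g w = 0 := by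
  have : FiniteDimensional F W := FiniteDimensional.of_finrank_pos (by lia)
  have hker : LinearMap.ker (f.prod g) ≠ ⊥ := LinearMap.ker_ne_bot_of_finrank_lt (by simpa)
  obtain ⟨w, hw, hw0⟩ := (Submodule.ne_bot_iff _).1 hker
  exact ⟨w, hw0, congrArg Prod.fst hw, congrArg Prod.snd hw⟩

theorem exists_basis_of_isAlt_of_ne_zero (hW : finrank F W = 3) {φ : W →ₗ[F] W →ₗ[F] F}
    (hφ : φ.IsAlt) (hne : φ ≠ 0) :
    ∃ e : Basis (Fin 3) F W, φ (e 0) (e 1) = 1 ∧ φ (e 0) (e 2) = 0 ∧ φ (e 1) (e 2) = 0 := by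
  obtain ⟨u, v, huv⟩ := exists_apply_apply_eq_one hne
  have hvu : φ v u = -1 := by rw [← hφ.neg, huv]
  obtain ⟨r, hr, hur, hvr⟩ := exists_ne_zero_apply_eq_zero_of_two_lt_finrank (by lia) (φ u) (φ v)
  have hind : LinearIndependent F ![u, v, r] := by
    refine Fintype.linearIndependent_iff.2 fun a ha => ?_
    simp only [Fin.sum_univ_three, Matrix.cons_val] at ha
    have ha₁ : a 1 = 0 := by simpa [hφ.self_eq_zero, huv, hur] using congrArg (φ u) ha
    have ha₀ : a 0 = 0 := by simpa [hφ.self_eq_zero, hvu, hvr] using congrArg (φ v) ha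
    have ha₂ : a 2 = 0 := by simpa [ha₁, ha₀, hr] using ha
    simp [Fin.forall_fin_succ, ha₀, ha₁, ha₂]
  exact ⟨basisOfLinearIndependentOfCardEqFinrank hind (by simp [hW]), by simp [huv, hur, hvr]⟩

theorem finrank_skewAdjointSubmodule_le_six (hW : finrank F W = 3) {φ : W →ₗ[F] W →ₗ[F] F}
    (hφ : φ.IsAlt) (hne : φ ≠ 0) : finrank F φ.skewAdjointSubmodule ≤ 6 := by
  obtain ⟨e, h₀₁, h₀₂, h₁₂⟩ := exists_basis_of_isAlt_of_ne_zero hW hφ hne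
  have : FiniteDimensional F W := FiniteDimensional.of_finrank_pos (by lia)
  have hφ₀ : φ (e 0) = e.coord 1 := e.ext fun i => by
    fin_cases i <;> simp [hφ.self_eq_zero, h₀₁, h₀₂]
  have hφ₁ : φ (e 1) = -e.coord 0 := e.ext fun i => by
    fin_cases i <;> simp [hφ.self_eq_zero, ← hφ.neg (e 0), h₀₁, h₁₂]
  have hzero {w : W} (hw₀ : φ (e 0) w = 0) (hw₁ : φ (e 1) w = 0) (hw₂ : e.coord 2 w = 0) :
      w = 0 := e.forall_coord_eq_zero_iff.1 fun i => by
    fin_cases i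
    exacts [by simpa [hφ₁] using hw₁, by simpa [hφ₀] using hw₀, hw₂]
  let eval (i : Fin 3) : φ.skewAdjointSubmodule →ₗ[F] W :=
    LinearMap.applyₗ (e i) ∘ₗ φ.skewAdjointSubmodule.subtype
  let entries : φ.skewAdjointSubmodule →ₗ[F] W × F × F × F :=
    (eval 0).prod ((φ (e 1) ∘ₗ eval 1).prod ((e.coord 2 ∘ₗ eval 1).prod (e.coord 2 ∘ₗ eval 2)))
  have hentries : Function.Injective entries := by
    refine (injective_iff_map_eq_zero entries).2 fun ⟨A, hA⟩ hA₀ => ?_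
    have hskew (x y : W) : φ x (A y) = -φ (A x) y := by
      rw [(φ.mem_skewAdjointSubmodule A).1 hA x y]; simp
    have hAe₀ : A (e 0) = 0 := congrArg (·.1) hA₀
    have hAe₁ : A (e 1) = 0 :=
      hzero (by simp [hskew, hAe₀]) (congrArg (·.2.1) hA₀) (congrArg (·.2.2.1) hA₀)
    have hAe₂ : A (e 2) = 0 :=
      hzero (by simp [hskew, hAe₀]) (by simp [hskew, hAe₁]) (congrArg (·.2.2.2) hA₀)
    exact Subtype.ext (e.ext fun i => by fin_cases i <;> assumption)
  simpa [hW] using LinearMap.finrank_le_finrank_of_injective hentries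

theorem finrank_le_choose_two_of_isAlt_of_apply_eq_zero [FiniteDimensional F W]
    {B : W →ₗ[F] W →ₗ[F] N} (hB : B.IsAlt) (hspan : Submodule.map₂ B ⊤ ⊤ = ⊤) {w₀ : W}
    (hw₀ : w₀ ≠ 0) (hBw₀ : B w₀ = 0) : finrank F N ≤ (finrank F W - 1).choose 2 := by
  let q : W →ₗ[F] W ⧸ (F ∙ w₀) := (F ∙ w₀).mkQ
  have hker : F ∙ w₀ ≤ LinearMap.ker B.flip := (Submodule.span_singleton_le_iff_mem _ _).2 <|
    LinearMap.ext fun w => by simp [← hB.neg w₀, hBw₀]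
  let b : W →ₗ[F] W ⧸ (F ∙ w₀) →ₗ[F] N := ((F ∙ w₀).liftQ B.flip hker).flip
  obtain ⟨B', hB', hB'b⟩ := exists_isAlt_comp_eq (f := q) (b := b) (Submodule.mkQ_surjective _) hB
  have hspan' : Submodule.map₂ B' ⊤ ⊤ = ⊤ := by
    rw [eq_top_iff, ← hspan, Submodule.map₂_le]
    intro x _ y _
    have hxy : B' (q x) (q y) = B x y := by rw [hB'b]; rfl
    exact hxy ▸ Submodule.apply_mem_map₂ B' trivial trivial
  have hrank : finrank F (W ⧸ (F ∙ w₀)) = finrank F W - 1 := by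
    have := Submodule.finrank_quotient_add_finrank (F ∙ w₀)
    rw [finrank_span_singleton hw₀] at this
    lia
  exact hrank ▸ finrank_le_choose_two_of_isAlt hB' hspan'

theorem finrank_le_nine_of_isotropic_ker [FiniteDimensional F V] (hW : finrank F W = 3)
    {f : V →ₗ[F] W} (hf : Function.Surjective f) {c : V →ₗ[F] V →ₗ[F] W} (hc : c.SeparatingLeft)
    (hisotropic : ∀ x ∈ LinearMap.ker f, ∀ y ∈ LinearMap.ker f, c x y = 0)
    {φ : W →ₗ[F] W →ₗ[F] F} (hφ : φ.IsAlt) (hne : φ ≠ 0)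
    (hsymm : ∀ x ∈ LinearMap.ker f, ∀ y z, φ (f y) (c x z) = φ (f z) (c x y)) :
    finrank F V ≤ 9 := by
  obtain ⟨s, hs⟩ := f.exists_rightInverse_of_surjective (LinearMap.range_eq_top.2 hf)
  have hfs (w : W) : f (s w) = w := LinearMap.congr_fun hs w
  have : FiniteDimensional F W := FiniteDimensional.of_finrank_pos (by lia)
  let A : LinearMap.ker f →ₗ[F] Module.End F W :=
    LinearMap.lcomp F W s ∘ₗ c ∘ₗ (LinearMap.ker f).subtype
  have hA (x : LinearMap.ker f) (y : V) : A x (f y) = c x y :=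
    (sub_eq_zero.1 <| by
      rw [← map_sub]; exact hisotropic x x.2 _ (by simp [hfs]) : c x y = c x (s (f y))).symm
  have hskew (x : LinearMap.ker f) : A x ∈ φ.skewAdjointSubmodule := by
    refine (φ.mem_skewAdjointSubmodule _).2 fun y z => ?_
    obtain ⟨y, rfl⟩ := hf y
    obtain ⟨z, rfl⟩ := hf z
    rw [hA, ← hφ.neg, ← hsymm x x.2, ← hA, Pi.neg_apply, map_neg]
  have hinj : Function.Injective (A.codRestrict φ.skewAdjointSubmodule hskew) := by
    refine (injective_iff_map_eq_zero _).2 fun x hx => Subtype.ext (hc x fun y => ?_)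
    rw [← hA]; exact LinearMap.congr_fun (congrArg Subtype.val hx) (f y)
  have hker : finrank F (LinearMap.ker f) ≤ 6 :=
    (LinearMap.finrank_le_finrank_of_injective hinj).trans
      (finrank_skewAdjointSubmodule_le_six hW hφ hne)
  have := LinearMap.finrank_range_add_finrank_ker f
  rw [LinearMap.range_eq_top.2 hf, finrank_top] at this
  lia

theorem exists_dual_compr₂_ne_zero {B : V →ₗ[F] W →ₗ[F] N} (hB : B ≠ 0) :
    ∃ l : Dual F N, B.compr₂ l ≠ 0 := by
  contrapose! hB
  exact LinearMap.ext₂ fun v w => (forall_dual_apply_eq_zero_iff F _).1 fun l =>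
    LinearMap.congr_fun₂ (hB l) v w

theorem finrank_le_one_of_jacobi (hW : finrank F W = 3) (hV : 9 < finrank F V)
    {f : V →ₗ[F] W} (hf : Function.Surjective f) {c : V →ₗ[F] V →ₗ[F] W} (hc : c.IsAlt)
    (hc' : c.SeparatingLeft) {b : V →ₗ[F] W →ₗ[F] N} (hb : ∀ x, b x (f x) = 0)
    (hjacobi : ∀ x y z, b x (c y z) + b y (c z x) + b z (c x y) = 0)
    (hspan : Submodule.map₂ b ⊤ ⊤ = ⊤) : finrank F N ≤ 1 := by
  have : FiniteDimensional F V := FiniteDimensional.of_finrank_pos (by lia)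
  have : FiniteDimensional F W := FiniteDimensional.of_finrank_pos (by lia)
  obtain ⟨B, hB, hBf⟩ := exists_isAlt_comp_eq hf hb
  have hBspan : Submodule.map₂ B ⊤ ⊤ = ⊤ := by
    rw [eq_top_iff, ← hspan, Submodule.map₂_le]
    exact fun x _ w _ => hBf x ▸ Submodule.apply_mem_map₂ B trivial trivial
  by_cases hisotropic : ∀ x ∈ LinearMap.ker f, ∀ y ∈ LinearMap.ker f, c x y = 0
  · have hB₀ : B = 0 := by
      by_contra hne
      obtain ⟨l, hl⟩ := exists_dual_compr₂_ne_zero hne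
      refine hV.not_ge (finrank_le_nine_of_isotropic_ker hW hf hc' hisotropic (φ := B.compr₂ l)
        (fun w => by simp [hB.self_eq_zero]) hl fun x hx y z => ?_)
      have hxyz := hjacobi x y z
      rw [← hBf x, hx, map_zero, LinearMap.zero_apply, zero_add, ← hc.neg, map_neg,
        neg_add_eq_zero, ← hBf, ← hBf] at hxyz
      simp [hxyz]
    have : Subsingleton N := (Submodule.subsingleton_iff F).1 <| subsingleton_of_bot_eq_top <| by
      rw [← hBspan, hB₀, eq_comm, ← le_bot_iff, Submodule.map₂_le]
      simp
    exact finrank_zero_of_subsingleton.trans_le zero_le_one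
  · push Not at hisotropic
    obtain ⟨x, hx, y, hy, hxy⟩ := hisotropic
    have hBxy : B (c x y) = 0 := LinearMap.ext fun w => by
      obtain ⟨z, rfl⟩ := hf w
      have hxyz := hjacobi x y z
      rw [← hBf x, hx, ← hBf y, hy] at hxyz
      rw [← hB.neg, hBf]
      simpa using hxyz
    simpa [hW] using finrank_le_choose_two_of_isAlt_of_apply_eq_zero hB hBspan hxy hBxy

end Field

section ZMod

variable {p k : ℕ} [Fact p.Prime] {V : Type*} [AddCommGroup V] [Module (ZMod p) V]
  [Module.Finite (ZMod p) V]

theorem natCard_dvd_pow_of_finrank_le (hV : finrank (ZMod p) V ≤ k) : Nat.card V ∣ p ^ k := by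
  rw [Module.natCard_eq_pow_finrank (K := ZMod p), Nat.card_zmod]
  exact pow_dvd_pow p hV

theorem finrank_eq_of_natCard_eq_pow (hV : Nat.card V = p ^ k) : finrank (ZMod p) V = k := by
  rw [Module.natCard_eq_pow_finrank (K := ZMod p), Nat.card_zmod] at hV
  exact Nat.pow_right_injective (Fact.out : p.Prime).two_le hV

theorem lt_finrank_of_pow_lt_natCard (hV : p ^ k < Nat.card V) : k < finrank (ZMod p) V := by
  rw [Module.natCard_eq_pow_finrank (K := ZMod p), Nat.card_zmod] at hV
  exact (Nat.pow_lt_pow_iff_right (Fact.out : p.Prime).one_lt).1 hV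

end ZMod

end BilinearMaps

/-! ### Pairings of groups -/

section Pairing

open Module Subgroup

variable {H T A B N : Type*} [Group H] [Group T] [CommGroup A] [CommGroup B] [CommGroup N]

theorem exists_monoidHom_comp_eq {G K : Type*} [Group G] [Group K] {q : H →* G}
    (hq : Function.Surjective q) {φ : H →* K} (hker : q.ker ≤ φ.ker) :
    ∃ ψ : G →* K, ∀ h, ψ (q h) = φ h :=
  ⟨q.liftOfSurjective hq ⟨φ, hker⟩,
    q.liftOfRightInverse_comp_apply _ (Function.rightInverse_surjInv hq) ⟨φ, hker⟩⟩

theorem exists_monoidHom₂_comp_eq {q₁ : H →* A} (hq₁ : Function.Surjective q₁) {q₂ : T →* B}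
    (hq₂ : Function.Surjective q₂) {φ : H →* T →* N} (h₁ : q₁.ker ≤ φ.ker)
    (h₂ : q₂.ker ≤ φ.flip.ker) : ∃ ψ : A →* B →* N, ∀ h t, ψ (q₁ h) (q₂ t) = φ h t := by
  obtain ⟨φ₁, hφ₁⟩ := exists_monoidHom_comp_eq hq₁ h₁
  have h₂' : q₂.ker ≤ φ₁.flip.ker := fun t ht => MonoidHom.ext fun a => by
    obtain ⟨h, rfl⟩ := hq₁ a
    rw [MonoidHom.flip_apply, hφ₁]
    exact DFunLike.congr_fun (h₂ ht) h
  obtain ⟨φ₂, hφ₂⟩ := exists_monoidHom_comp_eq hq₂ h₂'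
  exact ⟨φ₂.flip, fun h t => by rw [MonoidHom.flip_apply, hφ₂, MonoidHom.flip_apply, hφ₁]⟩

theorem exists_linearMap₂_comp_eq {n : ℕ} [Module (ZMod n) (Additive A)]
    [Module (ZMod n) (Additive B)] [Module (ZMod n) (Additive N)] {q₁ : H →* A}
    (hq₁ : Function.Surjective q₁) {q₂ : T →* B} (hq₂ : Function.Surjective q₂)
    {φ : H →* T →* N} (h₁ : q₁.ker ≤ φ.ker) (h₂ : q₂.ker ≤ φ.flip.ker) :
    ∃ ψ : Additive A →ₗ[ZMod n] Additive B →ₗ[ZMod n] Additive N,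
      ∀ h t, ψ (.ofMul (q₁ h)) (.ofMul (q₂ t)) = .ofMul (φ h t) := by
  obtain ⟨ψ, hψ⟩ := exists_monoidHom₂_comp_eq hq₁ hq₂ h₁ h₂
  let ψ' : Additive A →+ Additive B →ₗ[ZMod n] Additive N :=
    AddMonoidHom.mk' (fun a => (ψ a.toMul).toAdditive.toZModLinearMap n) fun a a' =>
      LinearMap.ext fun b => by simp
  exact ⟨ψ'.toZModLinearMap n, hψ⟩

theorem eq_top_of_closure_eq_top {n : ℕ} [Module (ZMod n) (Additive A)] {s : Set A}
    (hs : closure s = ⊤) {P : Submodule (ZMod n) (Additive A)}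
    (hP : ∀ x ∈ s, Additive.ofMul x ∈ P) : P = ⊤ := by
  have hle : closure s ≤ AddSubgroup.toSubgroup' P.toAddSubgroup := (closure_le _).2 hP
  rw [hs] at hle
  exact eq_top_iff.2 fun x _ => hle (mem_top x.toMul)

theorem map₂_eq_top_of_closure_eq_top {n : ℕ} {ι κ V W : Type*} [AddCommGroup V]
    [Module (ZMod n) V] [AddCommGroup W] [Module (ZMod n) W] [Module (ZMod n) (Additive N)]
    {φ : ι → κ → N} (hφ : closure {x | ∃ i j, φ i j = x} = ⊤) {f : ι → V} {g : κ → W}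
    {ψ : V →ₗ[ZMod n] W →ₗ[ZMod n] Additive N} (hψ : ∀ i j, ψ (f i) (g j) = .ofMul (φ i j)) :
    Submodule.map₂ ψ ⊤ ⊤ = ⊤ := by
  refine eq_top_of_closure_eq_top hφ ?_
  rintro _ ⟨i, j, rfl⟩
  exact hψ i j ▸ Submodule.apply_mem_map₂ ψ trivial trivial

theorem pow_eq_one_of_closure_eq_top {n : ℕ} {φ : H →* T →* N}
    (hφ : closure {x | ∃ h t, φ h t = x} = ⊤) (hn : ∀ t : T, t ^ n ∈ φ.flip.ker) (x : N) :
    x ^ n = 1 := by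
  have hle : closure {x | ∃ h t, φ h t = x} ≤ (powMonoidHom n : N →* N).ker := by
    rw [closure_le]
    rintro _ ⟨h, t, rfl⟩
    have ht : φ h (t ^ n) = 1 := DFunLike.congr_fun (hn t) h
    exact (map_pow (φ h) t n).symm.trans ht
  rw [hφ] at hle
  exact hle (mem_top x)

theorem natCard_dvd_pow_choose_two_of_alternating {p : ℕ} [Fact p.Prime]
    [Module (ZMod p) (Additive A)] [Module.Finite (ZMod p) (Additive A)] {q₁ : H →* A}
    (hq₁ : Function.Surjective q₁) {q₂ : T →* A} {φ : H →* T →* N}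
    (h₁ : q₁.ker ≤ φ.ker) (h₂ : q₂.ker ≤ φ.flip.ker) (halt : ∀ h, ∃ t, q₂ t = q₁ h ∧ φ h t = 1)
    (hφ : closure {x | ∃ h t, φ h t = x} = ⊤) :
    Nat.card N ∣ p ^ (finrank (ZMod p) (Additive A)).choose 2 := by
  have hq₂ : Function.Surjective q₂ := hq₁.forall.2 fun h => (halt h).imp fun _ => And.left
  have hpow (t : T) : t ^ p ∈ φ.flip.ker := h₂ <| by
    rw [MonoidHom.mem_ker, map_pow]
    exact ZModModule.char_nsmul_eq_zero p (Additive.ofMul (q₂ t))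
  have : Module (ZMod p) (Additive N) :=
    AddCommGroup.zmodModule fun x => pow_eq_one_of_closure_eq_top hφ hpow x.toMul
  obtain ⟨B, hB⟩ := exists_linearMap₂_comp_eq (n := p) hq₁ hq₂ h₁ h₂
  have hspan := map₂_eq_top_of_closure_eq_top hφ hB
  have hBalt : B.IsAlt := fun a => by
    obtain ⟨h, hh⟩ := hq₁ a.toMul
    obtain ⟨t, ht, hht⟩ := halt h
    simpa [ht, hht, hh] using hB h t
  have := finite_of_map₂_eq_top hspan
  exact natCard_dvd_pow_of_finrank_le (V := Additive N) (finrank_le_choose_two_of_isAlt hBalt hspan)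

theorem finrank_additive_le_rank [Group.FG A] {p : ℕ} [Fact p.Prime]
    [Module (ZMod p) (Additive A)] : finrank (ZMod p) (Additive A) ≤ Group.rank A := by
  obtain ⟨S, hcard, hS⟩ := Group.rank_spec A
  have hspan : Submodule.span (ZMod p) (S.map Additive.ofMul.toEmbedding : Set (Additive A)) = ⊤ :=
    eq_top_of_closure_eq_top hS fun x hx => Submodule.subset_span (by simpa using hx)
  have := finrank_span_finset_le_card (R := ZMod p) (S.map Additive.ofMul.toEmbedding)
  rw [Set.finrank, hspan] at this
  simpa [hcard] using this

end Pairing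

/-! ### Central commutators -/

section CentralCommutator

open Subgroup

variable {G H : Type*} [Group G] [Group H]

theorem commutatorElement_mul_left_of_mem_center (g : H) {h t : H} (ht : ⁅h, t⁆ ∈ center H) :
    ⁅g * h, t⁆ = ⁅g, t⁆ * ⁅h, t⁆ := by
  rw [commutatorElement_mul_left_eq_conj_mul, mem_center_iff.1 ht g, mul_inv_cancel_right,
    mem_center_iff.1 ht]

theorem commutatorElement_mul_right_of_mem_center {h t : H} (s : H) (ht : ⁅h, t⁆ ∈ center H) :
    ⁅h, s * t⁆ = ⁅h, s⁆ * ⁅h, t⁆ := by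
  rw [commutatorElement_mul_right_eq_mul_conj, mul_assoc _ s, mem_center_iff.1 ht s, ← mul_assoc,
    mul_inv_cancel_right]

theorem commutatorElement_pow_left_of_mem_center {x y : G} (h : ⁅x, y⁆ ∈ center G) (n : ℕ) :
    ⁅x ^ n, y⁆ = ⁅x, y⁆ ^ n := by
  induction n with
  | zero => simp
  | succ n ih => rw [pow_succ, commutatorElement_mul_left_of_mem_center _ h, ih, pow_succ]

theorem mul_pow_of_commutatorElement_mem_center {x y : G} (h : ⁅y, x⁆ ∈ center G) (n : ℕ) :
    (x * y) ^ n = x ^ n * y ^ n * ⁅y, x⁆ ^ n.choose 2 := by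
  have hcomm (k : ℕ) (g : G) : g * ⁅y, x⁆ ^ k = ⁅y, x⁆ ^ k * g := mem_center_iff.1 (pow_mem h k) g
  induction n with
  | zero => simp
  | succ n ih =>
    have hswap : y ^ n * x = x * y ^ n * ⁅y, x⁆ ^ n := by
      rw [hcomm, ← commutatorElement_pow_left_of_mem_center h, commutatorElement_def]
      group
    calc (x * y) ^ (n + 1) = x ^ n * y ^ n * ⁅y, x⁆ ^ n.choose 2 * (x * y) := by rw [pow_succ, ih]
      _ = x ^ n * (y ^ n * x) * y * ⁅y, x⁆ ^ n.choose 2 := by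
        rw [mul_assoc, ← hcomm]; simp only [mul_assoc]
      _ = x ^ n * x * y ^ n * (y * ⁅y, x⁆ ^ n) * ⁅y, x⁆ ^ n.choose 2 := by
        rw [hswap, hcomm n y]; simp only [mul_assoc]
      _ = x ^ (n + 1) * y ^ (n + 1) * ⁅y, x⁆ ^ (n + 1).choose 2 := by
        rw [Nat.choose_succ_succ', Nat.choose_one_right, pow_add ⁅y, x⁆, pow_succ x n,
          pow_succ y n]
        simp only [mul_assoc]

theorem isMulCommutative_of_le_center {K : Subgroup H} (hK : K ≤ center H) : IsMulCommutative K :=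
  le_centralizer_iff_isMulCommutative.1 fun _ hx => center_le_centralizer _ (hK hx)

theorem map_mk'_commutator_le_center (K : Subgroup H) [K.Normal] :
    K.map (QuotientGroup.mk' ⁅(⊤ : Subgroup H), K⁆) ≤ center (H ⧸ ⁅(⊤ : Subgroup H), K⁆) := by
  rintro _ ⟨k, hk, rfl⟩
  refine mem_center_iff.2 (QuotientGroup.mk_surjective.forall.2 fun h => ?_)
  refine commutatorElement_eq_one_iff_mul_comm.1 ((QuotientGroup.eq_one_iff ⁅h, k⁆).2 ?_)
  exact commutator_mem_commutator (mem_top h) hk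

theorem commutator_comap_le_ker (π : H →* G) {K : Subgroup G} (hK : K ≤ center G) :
    ⁅(⊤ : Subgroup H), K.comap π⁆ ≤ π.ker := by
  refine commutator_le.2 fun h _ t ht => ?_
  rw [MonoidHom.mem_ker, map_commutatorElement, commutatorElement_eq_one_iff_mul_comm]
  exact mem_center_iff.1 (hK ht) (π h)

theorem comap_commutator_eq_sup_ker {π : H →* G} (hπ : Function.Surjective π) :
    (commutator G).comap π = commutator H ⊔ π.ker := by
  rw [commutator_def, commutator_def, ← map_top_of_surjective π hπ, ← map_commutator, comap_map_eq]

theorem map_commutator_eq_commutator {π : H →* G} (hπ : Function.Surjective π) :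
    (commutator H).map π = commutator G := by
  rw [commutator_def, map_commutator, map_top_of_surjective π hπ, commutator_def]

theorem card_eq_card_ker_inf_mul_card_map (f : G →* H) (K : Subgroup G) :
    Nat.card K = Nat.card (f.ker ⊓ K : Subgroup G) * Nat.card (K.map f) := by
  rw [← relIndex_ker, ← relIndex_bot_left, ← relIndex_bot_left, ← inf_relIndex_right f.ker,
    relIndex_mul_relIndex _ _ _ bot_le inf_le_right]

end CentralCommutator

section CommutatorPairing

open Module Subgroup

variable {H : Type*} [Group H]

section

variable {T : Subgroup H} [IsMulCommutative ↥⁅(⊤ : Subgroup H), T⁆]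

/-- The pairing `(h, t) ↦ ⁅h, t⁆`, which is multiplicative in each variable when `⁅H, T⁆` is
central. -/
def commutatorPairing (hT : ⁅(⊤ : Subgroup H), T⁆ ≤ center H) :
    H →* T →* ↥⁅(⊤ : Subgroup H), T⁆ :=
  have hmem (h : H) (t : T) : ⁅h, (t : H)⁆ ∈ ⁅(⊤ : Subgroup H), T⁆ :=
    commutator_mem_commutator (mem_top h) t.2
  MonoidHom.mk' (fun h => MonoidHom.mk' (fun t => ⟨⁅h, (t : H)⁆, hmem h t⟩) fun _ t =>
    Subtype.ext <| commutatorElement_mul_right_of_mem_center _ (hT (hmem h t))) fun _ h =>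
    MonoidHom.ext fun t => Subtype.ext <|
      commutatorElement_mul_left_of_mem_center _ (hT (hmem h t))

@[simp]
theorem coe_commutatorPairing_apply (hT : ⁅(⊤ : Subgroup H), T⁆ ≤ center H) (h : H) (t : T) :
    (commutatorPairing hT h t : H) = ⁅h, (t : H)⁆ :=
  rfl

theorem closure_commutatorPairing_eq_top (hT : ⁅(⊤ : Subgroup H), T⁆ ≤ center H) :
    closure {x | ∃ h t, commutatorPairing hT h t = x} = ⊤ := by
  have hset : {x | ∃ h t, commutatorPairing hT h t = x} =
      ((↑) : ↥⁅(⊤ : Subgroup H), T⁆ → H) ⁻¹' {x | ∃ h ∈ (⊤ : Subgroup H), ∃ t ∈ T, ⁅h, t⁆ = x} := by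
    ext x
    simp [Subtype.ext_iff]
  rw [hset]
  exact closure_closure_coe_preimage

theorem mem_ker_commutatorPairing (hT : ⁅(⊤ : Subgroup H), T⁆ ≤ center H) {h : H}
    (hh : h ∈ center H) : h ∈ (commutatorPairing hT).ker :=
  MonoidHom.ext fun t => Subtype.ext <|
    commutatorElement_eq_one_iff_mul_comm.2 (mem_center_iff.1 hh t).symm

theorem mem_ker_flip_commutatorPairing (hT : ⁅(⊤ : Subgroup H), T⁆ ≤ center H) {t : T}
    (ht : (t : H) ∈ center H) : t ∈ (commutatorPairing hT).flip.ker :=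
  MonoidHom.ext fun h => Subtype.ext <|
    commutatorElement_eq_one_iff_mul_comm.2 (mem_center_iff.1 ht h)

theorem commutatorPairing_jacobi (hT : ⁅(⊤ : Subgroup H), T⁆ ≤ center H)
    (hHT : γ₂(H) ≤ T) (g h k : H) :
    commutatorPairing hT g ⟨⁅h, k⁆, hHT (commutator_mem_commutator (mem_top h) (mem_top k))⟩ *
      commutatorPairing hT h ⟨⁅k, g⁆, hHT (commutator_mem_commutator (mem_top k) (mem_top g))⟩ *
      commutatorPairing hT k ⟨⁅g, h⁆, hHT (commutator_mem_commutator (mem_top g) (mem_top h))⟩ =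
        1 := by
  have hconj (x y : H) (t : T) : commutatorPairing hT (x * y * x⁻¹) t = commutatorPairing hT y t :=
    DFunLike.congr_fun (by rw [map_mul, map_mul, map_inv, mul_inv_cancel_comm]) t
  rw [← hconj k g, ← hconj g h, ← hconj h k, mul_right_comm]
  exact Subtype.ext (commutatorElement_conj_commutatorElement_mul k g h)

end

theorem pow_eq_one_of_mem_commutator {n : ℕ} (hcen : γ₂(H) ≤ center H)
    (hpow : ∀ x : H, x ^ n ∈ center H) (z : ↥γ₂(H)) : z ^ n = 1 := by
  have := isMulCommutative_of_le_center hcen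
  exact pow_eq_one_of_closure_eq_top (closure_commutatorPairing_eq_top hcen)
    (fun t => mem_ker_flip_commutatorPairing hcen (hpow t)) z

theorem pow_eq_one_of_mem_commutator_comap {G : Type*} [Group G] {π : H →* G}
    (hker : π.ker ≤ center H) {K : Subgroup G} (hK : K ≤ center G) {n : ℕ}
    (hpow : ∀ x : K, x ^ n = 1) (z : ↥⁅(⊤ : Subgroup H), K.comap π⁆) : z ^ n = 1 := by
  have hT := (commutator_comap_le_ker π hK).trans hker
  have := isMulCommutative_of_le_center hT
  refine pow_eq_one_of_closure_eq_top (closure_commutatorPairing_eq_top hT)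
    (fun t => mem_ker_flip_commutatorPairing hT (hker ?_)) z
  exact (map_pow π (t : H) n).trans (congrArg Subtype.val (hpow ⟨π t, t.2⟩))

variable {p : ℕ} [Fact p.Prime] {A : Type*} [CommGroup A] [Module (ZMod p) (Additive A)]
  [Module.Finite (ZMod p) (Additive A)] {q : H →* A}

theorem natCard_commutator_dvd_of_ker_le_center (hq : Function.Surjective q)
    (hker : q.ker ≤ center H) :
    Nat.card (commutator H) ∣ p ^ (finrank (ZMod p) (Additive A)).choose 2 := by
  have hcen : γ₂(H) ≤ center H := (Abelianization.commutator_subset_ker q).trans hker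
  have := isMulCommutative_of_le_center hcen
  rw [commutator_def]
  exact natCard_dvd_pow_choose_two_of_alternating hq (q₂ := q.comp (⊤ : Subgroup H).subtype)
    (fun _ hh => mem_ker_commutatorPairing hcen (hker hh))
    (fun _ ht => mem_ker_flip_commutatorPairing hcen (hker ht))
    (fun h => ⟨⟨h, mem_top h⟩, rfl, Subtype.ext (commutatorElement_self h)⟩)
    (closure_commutatorPairing_eq_top hcen)

theorem natCard_commutator_dvd_mul (hq : Function.Surjective q) :
    Nat.card (commutator H) ∣
      Nat.card ↥⁅(⊤ : Subgroup H), q.ker⁆ * p ^ (finrank (ZMod p) (Additive A)).choose 2 := by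
  have hle : ⁅(⊤ : Subgroup H), q.ker⁆ ≤ q.ker := commutator_le_right _ _
  have hle' : ⁅(⊤ : Subgroup H), q.ker⁆ ≤ commutator H := commutator_mono le_rfl le_top
  have hker : (QuotientGroup.lift _ q hle).ker ≤ center (H ⧸ ⁅(⊤ : Subgroup H), q.ker⁆) := by
    rw [QuotientGroup.ker_lift]
    exact map_mk'_commutator_le_center q.ker
  rw [card_eq_card_ker_inf_mul_card_map (QuotientGroup.mk' ⁅(⊤ : Subgroup H), q.ker⁆),
    map_commutator_eq_commutator (QuotientGroup.mk'_surjective _), QuotientGroup.ker_mk',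
    inf_eq_left.2 hle']
  exact mul_dvd_mul_left _ (natCard_commutator_dvd_of_ker_le_center
    (QuotientGroup.lift_surjective_of_surjective _ q hq hle) hker)

end CommutatorPairing

/-! ### Central extensions of special groups -/

section SpecialGroup

open Module Subgroup

variable {p : ℕ} {G H : Type*} [Group G] [Group H] {π : H →* G}

section

variable [IsMulCommutative ↥γ₂(G)] [Module (ZMod p) (Additive (Abelianization G))]
  [Module (ZMod p) (Additive ↥γ₂(G))]

theorem exists_commutatorLinearMap (hG : center G = γ₂(G)) :
    ∃ c : Additive (Abelianization G) →ₗ[ZMod p] Additive (Abelianization G) →ₗ[ZMod p]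
        Additive ↥γ₂(G),
      c.IsAlt ∧ c.SeparatingLeft ∧
        ∀ x y, ((c (.ofMul (.of x)) (.ofMul (.of y))).toMul : G) = ⁅x, y⁆ := by
  have hker {x : G} (hx : x ∈ (Abelianization.of (G := G)).ker) : x ∈ center G := by
    rwa [hG, ← commutator_def, ← Abelianization.ker_of]
  have hof : Function.Surjective (Abelianization.of (G := G)) := QuotientGroup.mk_surjective
  obtain ⟨c, hc⟩ := exists_linearMap₂_comp_eq (n := p) (φ := commutatorPairing hG.ge) hof
    (q₂ := Abelianization.of.comp (⊤ : Subgroup G).subtype) (hof.comp topEquiv.surjective)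
    (fun _ hx => mem_ker_commutatorPairing hG.ge (hker hx))
    (fun _ hx => mem_ker_flip_commutatorPairing hG.ge (hker hx))
  have hc' (x y : G) : ((c (.ofMul (.of x)) (.ofMul (.of y))).toMul : G) = ⁅x, y⁆ :=
    congrArg (fun z => (z.toMul : G)) (hc x ⟨y, mem_top y⟩)
  refine ⟨c, fun v => ?_, fun v hv => ?_, hc'⟩
  · obtain ⟨x, rfl⟩ := hof v
    exact Subtype.ext ((hc' x x).trans (commutatorElement_self x))
  · obtain ⟨x, rfl⟩ := hof v
    have hx : x ∈ center G := mem_center_iff.2 fun y => by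
      refine (commutatorElement_eq_one_iff_mul_comm.1 ?_).symm
      rw [← hc' x y]
      exact congrArg (fun z => (z.toMul : G)) (hv _)
    rwa [hG, ← commutator_def, ← Abelianization.ker_of] at hx

theorem exists_powLinearMap [Fact p.Prime] (hp : p ≠ 2) (hcen : γ₂(G) ≤ center G)
    (hGp : closure (Set.range fun x : G => x ^ p) = γ₂(G)) :
    ∃ f : Additive (Abelianization G) →ₗ[ZMod p] Additive ↥γ₂(G),
      Function.Surjective f ∧ ∀ x, ((f (.ofMul (.of x))).toMul : G) = x ^ p := by
  have hexp {z : G} (hz : z ∈ γ₂(G)) : z ^ p = 1 :=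
    congrArg (fun z => (z.toMul : G))
      (ZModModule.char_nsmul_eq_zero p (Additive.ofMul (⟨z, hz⟩ : ↥γ₂(G))))
  let P : G →* ↥γ₂(G) := MonoidHom.mk'
    (fun x => ⟨x ^ p, hGp ▸ subset_closure ⟨x, rfl⟩⟩) fun x y => Subtype.ext <| by
      have hyx := commutator_mem_commutator (mem_top y) (mem_top x)
      obtain ⟨k, hk⟩ := (Fact.out : p.Prime).dvd_choose_self two_ne_zero
        ((Fact.out : p.Prime).two_le.lt_of_ne hp.symm)
      simp [mul_pow_of_commutatorElement_mem_center (hcen hyx), hk, pow_mul, hexp hyx]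
  have hP : Function.Surjective P := fun z => by
    have hle : γ₂(G) ≤ P.range.map (Subgroup.subtype _) :=
      hGp.ge.trans <| (closure_le _).2 <| by
        rintro _ ⟨x, rfl⟩
        exact ⟨P x, ⟨x, rfl⟩, rfl⟩
    obtain ⟨_, ⟨x, rfl⟩, hx⟩ := hle z.2
    exact ⟨x, Subtype.ext hx⟩
  refine ⟨(Abelianization.lift P).toAdditive.toZModLinearMap p, fun z => ?_, fun x => rfl⟩
  obtain ⟨x, hx⟩ := hP z
  exact ⟨.of x, hx⟩

variable [IsMulCommutative ↥⁅(⊤ : Subgroup H), γ₂(G).comap π⁆]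
  [Module (ZMod p) (Additive ↥⁅(⊤ : Subgroup H), γ₂(G).comap π⁆)]

theorem exists_comapCommutatorLinearMap (hπ : Function.Surjective π) (hker : π.ker ≤ center H)
    (hT : ⁅(⊤ : Subgroup H), γ₂(G).comap π⁆ ≤ center H) :
    ∃ b : Additive (Abelianization G) →ₗ[ZMod p] Additive ↥γ₂(G) →ₗ[ZMod p]
        Additive ↥⁅(⊤ : Subgroup H), γ₂(G).comap π⁆,
      ∀ h t, b (.ofMul (.of (π h))) (.ofMul (π.subgroupComap _ t)) =
        .ofMul (commutatorPairing hT h t) := by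
  refine exists_linearMap₂_comp_eq (q₁ := Abelianization.of.comp π)
    (QuotientGroup.mk_surjective.comp hπ)
    (MonoidHom.subgroupComap_surjective_of_surjective π _ hπ) ?_ fun t ht =>
      mem_ker_flip_commutatorPairing hT (hker (congrArg Subtype.val ht))
  rw [← MonoidHom.comap_ker, Abelianization.ker_of, comap_commutator_eq_sup_ker hπ, sup_le_iff]
  exact ⟨Abelianization.commutator_subset_ker _, fun _ hh => mem_ker_commutatorPairing hT (hker hh)⟩

variable {hT : ⁅(⊤ : Subgroup H), γ₂(G).comap π⁆ ≤ center H}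
  {b : Additive (Abelianization G) →ₗ[ZMod p] Additive ↥γ₂(G) →ₗ[ZMod p]
    Additive ↥⁅(⊤ : Subgroup H), γ₂(G).comap π⁆}

theorem apply_powLinearMap_eq_zero (hπ : Function.Surjective π)
    (hb : ∀ h t, b (.ofMul (.of (π h))) (.ofMul (π.subgroupComap _ t)) =
      .ofMul (commutatorPairing hT h t))
    {f : Additive (Abelianization G) →ₗ[ZMod p] Additive ↥γ₂(G)}
    (hf : ∀ x, ((f (.ofMul (.of x))).toMul : G) = x ^ p) (v : Additive (Abelianization G)) :
    b v (f v) = 0 := by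
  obtain ⟨x, rfl⟩ := QuotientGroup.mk_surjective v
  obtain ⟨h, rfl⟩ := hπ x
  have hpow : h ^ p ∈ γ₂(G).comap π := by
    rw [mem_comap, map_pow, ← hf]
    exact (f _).toMul.2
  have hfh : f (.ofMul (.of (π h))) = .ofMul (π.subgroupComap _ ⟨h ^ p, hpow⟩) :=
    Subtype.ext ((hf (π h)).trans (map_pow π h p).symm)
  refine (congrArg (b _) hfh).trans ((hb h _).trans (Subtype.ext ?_))
  exact commutatorElement_eq_one_iff_mul_comm.2 (Commute.self_pow h p)

theorem jacobi_commutatorLinearMap (hπ : Function.Surjective π)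
    (hb : ∀ h t, b (.ofMul (.of (π h))) (.ofMul (π.subgroupComap _ t)) =
      .ofMul (commutatorPairing hT h t))
    {c : Additive (Abelianization G) →ₗ[ZMod p] Additive (Abelianization G) →ₗ[ZMod p]
      Additive ↥γ₂(G)}
    (hc : ∀ x y, ((c (.ofMul (.of x)) (.ofMul (.of y))).toMul : G) = ⁅x, y⁆)
    (v₁ v₂ v₃ : Additive (Abelianization G)) :
    b v₁ (c v₂ v₃) + b v₂ (c v₃ v₁) + b v₃ (c v₁ v₂) = 0 := by
  have hHT : γ₂(H) ≤ γ₂(G).comap π := le_sup_left.trans (comap_commutator_eq_sup_ker hπ).ge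
  have hof : Function.Surjective (Abelianization.of.comp π) := QuotientGroup.mk_surjective.comp hπ
  have hbc (x y z : H) : b (.ofMul (.of (π x))) (c (.ofMul (.of (π y))) (.ofMul (.of (π z)))) =
      .ofMul (commutatorPairing hT x
        ⟨⁅y, z⁆, hHT (commutator_mem_commutator (mem_top y) (mem_top z))⟩) := by
    rw [← hb]
    refine congrArg (b _) (Subtype.ext ?_)
    exact (hc (π y) (π z)).trans (map_commutatorElement π y z).symm
  obtain ⟨h, rfl⟩ := hof v₁
  obtain ⟨k, rfl⟩ := hof v₂
  obtain ⟨l, rfl⟩ := hof v₃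
  refine (congrArg₂ (· + ·) (congrArg₂ (· + ·) (hbc h k l) (hbc k l h)) (hbc l h k)).trans ?_
  exact commutatorPairing_jacobi hT hHT h k l

theorem natCard_commutator_comap_dvd_of_finrank [Fact p.Prime] (hp : p ≠ 2) (hG : center G = γ₂(G))
    (hGp : closure (Set.range fun x : G => x ^ p) = γ₂(G))
    (hW : finrank (ZMod p) (Additive ↥γ₂(G)) = 3)
    (hV : 9 < finrank (ZMod p) (Additive (Abelianization G)))
    (hπ : Function.Surjective π) (hker : π.ker ≤ center H) :
    Nat.card ↥⁅(⊤ : Subgroup H), γ₂(G).comap π⁆ ∣ p := by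
  have hT := (commutator_comap_le_ker π hG.ge).trans hker
  obtain ⟨c, hc, hc', hcof⟩ := exists_commutatorLinearMap (p := p) hG
  obtain ⟨f, hf, hfof⟩ := exists_powLinearMap hp hG.ge hGp
  obtain ⟨b, hb⟩ := exists_comapCommutatorLinearMap (p := p) hπ hker hT
  have hspan := map₂_eq_top_of_closure_eq_top (closure_commutatorPairing_eq_top hT) hb
  have : Module.Finite (ZMod p) (Additive (Abelianization G)) :=
    FiniteDimensional.of_finrank_pos (by lia)
  have : Module.Finite (ZMod p) (Additive ↥γ₂(G)) := FiniteDimensional.of_finrank_pos (by lia)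
  have := finite_of_map₂_eq_top hspan
  suffices hrank : finrank (ZMod p) (Additive ↥⁅(⊤ : Subgroup H), γ₂(G).comap π⁆) ≤ 1 from
    (natCard_dvd_pow_of_finrank_le hrank).trans (pow_one p).dvd
  exact finrank_le_one_of_jacobi hW hV hf hc hc' (apply_powLinearMap_eq_zero hπ hb hfof)
    (jacobi_commutatorLinearMap hπ hb hcof) hspan

end

variable [Fact p.Prime]

theorem natCard_commutator_comap_dvd [Finite G] (hp : p ≠ 2) (hG : center G = γ₂(G))
    (hGp : closure (Set.range fun x : G => x ^ p) = γ₂(G))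
    (hcard : Nat.card ↥γ₂(G) = p ^ 3) (hbig : p ^ 13 ≤ Nat.card G)
    (hπ : Function.Surjective π) (hker : π.ker ≤ center H) :
    Nat.card ↥⁅(⊤ : Subgroup H), γ₂(G).comap π⁆ ∣ p := by
  have hT := (commutator_comap_le_ker π hG.ge).trans hker
  have := isMulCommutative_of_le_center hG.ge
  have := isMulCommutative_of_le_center hT
  have hpow (x : G) : x ^ p ∈ γ₂(G) := hGp ▸ subset_closure ⟨x, rfl⟩
  have hexp := pow_eq_one_of_mem_commutator hG.ge fun x => hG.ge (hpow x)
  have : Module (ZMod p) (Additive ↥γ₂(G)) := AddCommGroup.zmodModule hexp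
  have : Module (ZMod p) (Additive (Abelianization G)) :=
    AddCommGroup.zmodModule (QuotientGroup.mk_surjective.forall.2 fun x =>
      (QuotientGroup.eq_one_iff _).2 (hpow x))
  have : Module (ZMod p) (Additive ↥⁅(⊤ : Subgroup H), γ₂(G).comap π⁆) :=
    AddCommGroup.zmodModule (pow_eq_one_of_mem_commutator_comap hker hG.ge hexp)
  have hV : p ^ 9 < Nat.card (Additive (Abelianization G)) := by
    refine lt_of_mul_lt_mul_right ?_ (p ^ 3).zero_le
    calc p ^ 9 * p ^ 3 = p ^ 12 := (pow_add p 9 3).symm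
      _ < p ^ 13 := Nat.pow_lt_pow_succ (Fact.out : p.Prime).one_lt
      _ ≤ Nat.card G := hbig
      _ = Nat.card (Abelianization G) * p ^ 3 :=
        hcard ▸ card_eq_card_quotient_mul_card_subgroup (commutator G)
  exact natCard_commutator_comap_dvd_of_finrank hp hG hGp (finrank_eq_of_natCard_eq_pow hcard)
    (lt_finrank_of_pow_lt_natCard hV) hπ hker

theorem natCard_ker_inf_commutator_mul_dvd [Finite G] (hp : p ≠ 2) (hG : center G = γ₂(G))
    (hGp : closure (Set.range fun x : G => x ^ p) = γ₂(G))
    (hcard : Nat.card ↥γ₂(G) = p ^ 3) (hbig : p ^ 13 ≤ Nat.card G)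
    (hπ : Function.Surjective π) (hker : π.ker ≤ center H) :
    Nat.card (π.ker ⊓ commutator H : Subgroup H) * p ^ 3 ∣ p * p ^ (Group.rank G).choose 2 := by
  have hpow (x : G) : x ^ p ∈ commutator G := hGp.le (subset_closure ⟨x, rfl⟩)
  have : Module (ZMod p) (Additive (Abelianization G)) :=
    AddCommGroup.zmodModule (QuotientGroup.mk_surjective.forall.2 fun x =>
      (QuotientGroup.eq_one_iff _).2 (hpow x))
  have hrank : finrank (ZMod p) (Additive (Abelianization G)) ≤ Group.rank G :=
    finrank_additive_le_rank.trans
      (Group.rank_le_of_surjective Abelianization.of QuotientGroup.mk_surjective)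
  have hq : Function.Surjective (Abelianization.of.comp π) := QuotientGroup.mk_surjective.comp hπ
  have hcommH := natCard_commutator_dvd_mul (p := p) hq
  rw [← MonoidHom.comap_ker, Abelianization.ker_of] at hcommH
  calc Nat.card (π.ker ⊓ commutator H : Subgroup H) * p ^ 3 = Nat.card (commutator H) := by
        rw [card_eq_card_ker_inf_mul_card_map π (commutator H),
          map_commutator_eq_commutator hπ, ← hcard, _root_.commutator_def G]
    _ ∣ p * p ^ (finrank (ZMod p) (Additive (Abelianization G))).choose 2 :=
      hcommH.trans (mul_dvd_mul_right
        (natCard_commutator_comap_dvd hp hG hGp hcard hbig hπ hker) _)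
    _ ∣ p * p ^ (Group.rank G).choose 2 :=
      mul_dvd_mul_left p (pow_dvd_pow p (Nat.choose_le_choose 2 hrank))

end SpecialGroup

/-! ### Transgression -/

section FreeCentralExtension

open Subgroup

variable (G : Type*) [Group G]

/-- `F / [F, R]`, where `F / R` is the presentation of `G` with one free generator for each
element of `G`. Every extension of `G` with central kernel receives a morphism from it. -/
abbrev FreeCentralExtension : Type _ :=
  FreeGroup G ⧸ ⁅(⊤ : Subgroup (FreeGroup G)), (FreeGroup.lift (id : G → G)).ker⁆

namespace FreeCentralExtension

/-- The projection of `FreeCentralExtension G` onto `G`. -/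
def proj : FreeCentralExtension G →* G :=
  QuotientGroup.lift _ (FreeGroup.lift id) (commutator_le_right _ _)

theorem proj_surjective : Function.Surjective (proj G) :=
  QuotientGroup.lift_surjective_of_surjective _ _
    (fun g => ⟨FreeGroup.of g, FreeGroup.lift_apply_of⟩) _

theorem ker_proj_le_center : (proj G).ker ≤ center (FreeCentralExtension G) := by
  rw [proj, QuotientGroup.ker_lift]
  exact map_mk'_commutator_le_center _

variable {G}

theorem exists_comp_eq_proj {E : Type*} [Group E] {ψ : E →* G} (hψ : Function.Surjective ψ)
    (hker : ψ.ker ≤ center E) : ∃ θ : FreeCentralExtension G →* E, ψ.comp θ = proj G := by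
  let θ₀ : FreeGroup G →* E := FreeGroup.lift (Function.surjInv hψ)
  have hθ₀ : ψ.comp θ₀ = FreeGroup.lift id :=
    FreeGroup.ext_hom _ _ fun g => by simp [θ₀, Function.surjInv_eq hψ]
  have hle : ⁅(⊤ : Subgroup (FreeGroup G)), (FreeGroup.lift (id : G → G)).ker⁆ ≤ θ₀.ker := by
    refine commutator_le.2 fun x _ r hr => ?_
    have hr' : θ₀ r ∈ ψ.ker := (DFunLike.congr_fun hθ₀ r).trans hr
    rw [MonoidHom.mem_ker, map_commutatorElement, commutatorElement_eq_one_iff_mul_comm]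
    exact mem_center_iff.1 (hker hr') (θ₀ x)
  exact ⟨QuotientGroup.lift _ θ₀ hle, QuotientGroup.monoidHom_ext _ hθ₀⟩

end FreeCentralExtension

end FreeCentralExtension

theorem exists_monoidHom_extension_of_divisible {A H : Type*} [AddCommGroup A] [DivisibleBy A ℤ]
    [Group H] {R : Subgroup H} {χ : R →* Multiplicative A}
    (hχ : ∀ r : R, (r : H) ∈ commutator H → χ r = 1) :
    ∃ w : H →* Multiplicative A, ∀ r : R, w r = χ r := by
  let q : R →* Abelianization H := Abelianization.of.comp R.subtype
  have hq : q.rangeRestrict.ker ≤ χ.ker := by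
    rw [MonoidHom.ker_rangeRestrict, ← MonoidHom.comap_ker, Abelianization.ker_of]
    exact hχ
  obtain ⟨χ', hχ'⟩ := exists_monoidHom_comp_eq q.rangeRestrict_surjective hq
  obtain ⟨w, hw⟩ := (Module.Baer.of_divisible A).extension_property_addMonoidHom
    (MonoidHom.toAdditive q.range.subtype) Subtype.val_injective χ'.toAdditiveLeft
  exact ⟨(AddMonoidHom.toMultiplicativeRight w).comp Abelianization.of, fun r =>
    (DFunLike.congr_fun hw (.ofMul (q.rangeRestrict r))).trans (hχ' r)⟩

noncomputable instance : DivisibleBy (Additive ℂˣ) ℤ :=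
  Function.Surjective.divisibleBy
    (fun z : ℂ => Additive.ofMul (Units.mk0 (Complex.exp z) z.exp_ne_zero))
    (fun x => ⟨Complex.log (x.toMul : ℂˣ), Units.ext (Complex.exp_log (x.toMul : ℂˣ).ne_zero)⟩)
    fun z n => Units.ext ((congrArg Complex.exp (zsmul_eq_mul z n)).trans
      ((Complex.exp_int_mul z n).trans (Units.val_zpow_eq_zpow_val (.mk0 _ z.exp_ne_zero) n).symm))

section Cohomology

open Subgroup groupCohomology

variable {G : Type} [Group G] {A : Type*} [AddCommGroup A]

/-- The extension of `G` by the trivial `G`-module `A` classified by the cocycle `f`, on the set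
`A × G`. -/
@[ext]
structure CocycleExtension (f : cocycles₂ (Rep.trivial ℤ G A)) where
  val : A
  base : G

namespace CocycleExtension

variable (f : cocycles₂ (Rep.trivial ℤ G A))

instance : Mul (CocycleExtension f) :=
  ⟨fun x y => ⟨x.val + y.val + f (x.base, y.base), x.base * y.base⟩⟩

-- The cocycle need not be normalized: `f (1, g) = f (g, 1) = f (1, 1)` may be nonzero.
instance : One (CocycleExtension f) := ⟨⟨-f (1, 1), 1⟩⟩

instance : Inv (CocycleExtension f) :=
  ⟨fun x => ⟨-x.val - f (x.base⁻¹, x.base) - f (1, 1), x.base⁻¹⟩⟩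

instance : Group (CocycleExtension f) :=
  Group.ofLeftAxioms
    (fun x y z => CocycleExtension.ext
      (by
        have hf : f (x.base * y.base, z.base) + f (x.base, y.base) =
            f (y.base, z.base) + f (x.base, y.base * z.base) :=
          (mem_cocycles₂_iff f).1 f.2 x.base y.base z.base
        calc x.val + y.val + f (x.base, y.base) + z.val + f (x.base * y.base, z.base)
            = x.val + y.val + z.val + (f (x.base * y.base, z.base) + f (x.base, y.base)) := by abel
          _ = x.val + (y.val + z.val + f (y.base, z.base)) + f (x.base, y.base * z.base) := by
              rw [hf]; abel)
      (mul_assoc _ _ _))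
    (fun x => CocycleExtension.ext
      (calc -f (1, 1) + x.val + f (1, x.base) = -f (1, 1) + x.val + f (1, 1) := by
              rw [cocycles₂_map_one_fst f x.base]
        _ = x.val := by abel)
      (one_mul _))
    (fun x => CocycleExtension.ext
      (show -x.val - f (x.base⁻¹, x.base) - f (1, 1) + x.val + f (x.base⁻¹, x.base) = -f (1, 1) by
        abel)
      (inv_mul_cancel _))

/-- The projection of the extension classified by `f` onto `G`. -/
def proj : CocycleExtension f →* G where
  toFun := base
  map_one' := rfl
  map_mul' _ _ := rfl

theorem proj_surjective : Function.Surjective (proj f) := fun g => ⟨⟨0, g⟩, rfl⟩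

theorem ker_proj_le_center : (proj f).ker ≤ center (CocycleExtension f) := by
  rintro ⟨a, g⟩ (rfl : g = 1)
  refine mem_center_iff.2 fun x => CocycleExtension.ext ?_ ((mul_one _).trans (one_mul _).symm)
  calc x.val + a + f (x.base, 1) = x.val + a + f (1, 1) := by
        rw [cocycles₂_map_one_snd f x.base]; rfl
    _ = a + x.val + f (1, x.base) := by rw [cocycles₂_map_one_fst f x.base, add_comm a]

end CocycleExtension

variable {H : Type*} [Group H]

/-- `u` exhibits the pullback of the cocycle `f` along `π` as the coboundary of `-u`. -/
def IsTrivialization (π : H →* G) (f : cocycles₂ (Rep.trivial ℤ G A)) (u : H → A) : Prop :=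
  ∀ x y, u (x * y) = u x + u y + f (π x, π y)

theorem exists_isTrivialization_proj (f : cocycles₂ (Rep.trivial ℤ G A)) :
    ∃ u, IsTrivialization (FreeCentralExtension.proj G) f u := by
  obtain ⟨θ, hθ⟩ := FreeCentralExtension.exists_comp_eq_proj (CocycleExtension.proj_surjective f)
    (CocycleExtension.ker_proj_le_center f)
  refine ⟨fun x => (θ x).val, fun x y => ?_⟩
  exact (congrArg CocycleExtension.val (map_mul θ x y)).trans (by rw [← hθ]; rfl)

namespace IsTrivialization

variable {π : H →* G} {f g : cocycles₂ (Rep.trivial ℤ G A)} {u v : H → A}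

theorem sub (hu : IsTrivialization π f u) (hv : IsTrivialization π g v) :
    IsTrivialization π (f - g) (u - v) := by
  intro x y
  change u (x * y) - v (x * y) = u x - v x + (u y - v y) + (f (π x, π y) - g (π x, π y))
  rw [hu, hv]
  abel

theorem sub_monoidHom (hu : IsTrivialization π f u) (w : H →* Multiplicative A) :
    IsTrivialization π f (fun x => u x - (w x).toAdd) := by
  intro x y
  simp only [hu x y, map_mul, toAdd_mul]
  abel

theorem apply_mul_of_mem_ker (hu : IsTrivialization π f u) (x : H) {r : H} (hr : r ∈ π.ker) :
    u (x * r) = u x + (u r + f (1, 1)) := by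
  rw [hu, MonoidHom.mem_ker.1 hr, cocycles₂_map_one_snd, add_assoc]
  rfl

/-- The homomorphism on `π.ker` induced by a trivialization of the pullback of `f` along `π`; its
restriction to `π.ker ⊓ commutator H` is the transgression of `f`. The summand `f (1, 1)` corrects
for `f` not being normalized. -/
def transgression (hu : IsTrivialization π f u) : π.ker →* Multiplicative A :=
  MonoidHom.mk' (fun r => .ofAdd (u r + f (1, 1))) fun r s => by
    rw [← ofAdd_add, coe_mul, hu.apply_mul_of_mem_ker _ s.2]
    congr 1
    abel

theorem transgression_sub (hu : IsTrivialization π f u) (hv : IsTrivialization π g v) :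
    (hu.sub hv).transgression = hu.transgression / hv.transgression := by
  ext r
  change u r - v r + (f (1, 1) - g (1, 1)) = u r + f (1, 1) - (v r + g (1, 1))
  abel

theorem mem_coboundaries₂_of_transgression_eq_one (hu : IsTrivialization π f u)
    (hπ : Function.Surjective π) (h : hu.transgression = 1) :
    ⇑f ∈ coboundaries₂ (Rep.trivial ℤ G A) := by
  have hfib {x y : H} (hxy : π x = π y) : u x = u y := by
    have hr : x⁻¹ * y ∈ π.ker := by rw [MonoidHom.mem_ker, map_mul, map_inv, hxy, inv_mul_cancel]
    have hr' : u (x⁻¹ * y) + f (1, 1) = 0 := DFunLike.congr_fun h ⟨_, hr⟩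
    rw [← mul_inv_cancel_left x y, hu.apply_mul_of_mem_ker x hr, hr', add_zero]
  obtain ⟨s, hs⟩ := hπ.hasRightInverse
  refine ⟨fun g => -u (s g), funext fun ⟨g, h⟩ => ?_⟩
  have hmul : u (s (g * h)) = u (s g) + u (s h) + f (g, h) := by
    rw [hfib (y := s g * s h) (by rw [map_mul, hs, hs, hs]), hu, hs, hs]
  change -u (s h) - -u (s (g * h)) + -u (s g) = f (g, h)
  rw [hmul]
  abel

end IsTrivialization

theorem IsTrivialization.mem_coboundaries₂ [DivisibleBy A ℤ] {π : H →* G}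
    {f : cocycles₂ (Rep.trivial ℤ G A)} {u : H → A} (hu : IsTrivialization π f u)
    (hπ : Function.Surjective π)
    (h : ∀ r : π.ker, (r : H) ∈ commutator H → hu.transgression r = 1) :
    ⇑f ∈ coboundaries₂ (Rep.trivial ℤ G A) := by
  obtain ⟨w, hw⟩ := exists_monoidHom_extension_of_divisible h
  refine (hu.sub_monoidHom w).mem_coboundaries₂_of_transgression_eq_one hπ
    (MonoidHom.ext fun r => ?_)
  have hwr : (w r).toAdd = u r + f (1, 1) := hw r
  change u r - (w r).toAdd + f (1, 1) = 0
  rw [hwr]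
  abel

/-- The subgroup `(R ∩ [F, F]) / [F, R]` of `F / [F, R]`, which is `H₂(G, ℤ)` by Hopf's formula. -/
abbrev hopfSubgroup (G : Type*) [Group G] : Subgroup (FreeCentralExtension G) :=
  (FreeCentralExtension.proj G).ker ⊓ commutator (FreeCentralExtension G)

theorem exists_injective_H2_monoidHom {A : Type} [AddCommGroup A] [DivisibleBy A ℤ] :
    ∃ χ : H2 (Rep.trivial ℤ G A) → hopfSubgroup G →* Multiplicative A, Function.Injective χ := by
  have hrep (c : H2 (Rep.trivial ℤ G A)) : ∃ f, H2π (Rep.trivial ℤ G A) f = c :=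
    H2_induction_on c fun f => ⟨f, rfl⟩
  choose f hf using hrep
  choose u hu using fun c => exists_isTrivialization_proj (f c)
  refine ⟨fun c => (hu c).transgression.comp (inclusion inf_le_left), fun c c' hcc => ?_⟩
  rw [← hf c, ← hf c', H2π_eq_iff]
  refine ((hu c).sub (hu c')).mem_coboundaries₂ (FreeCentralExtension.proj_surjective G)
    fun r hr => ?_
  rw [(hu c).transgression_sub (hu c'), MonoidHom.div_apply, div_eq_one]
  exact DFunLike.congr_fun hcc ⟨r, r.2, hr⟩

theorem natCard_schurMultiplier_le [Finite (hopfSubgroup G)] :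
    Nat.card (schurMultiplier G) ≤ Nat.card (hopfSubgroup G) := by
  have := isMulCommutative_of_le_center
    ((inf_le_left : hopfSubgroup G ≤ _).trans (FreeCentralExtension.ker_proj_le_center G))
  have hcard : Nat.card (hopfSubgroup G →* Multiplicative (Additive ℂˣ)) =
      Nat.card (hopfSubgroup G) :=
    CommGroup.card_monoidHom_of_hasEnoughRootsOfUnity (hopfSubgroup G) ℂ
  have := Nat.finite_of_card_ne_zero (hcard.trans_ne Nat.card_pos.ne')
  obtain ⟨χ, hχ⟩ := exists_injective_H2_monoidHom (G := G) (A := Additive ℂˣ)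
  exact (Nat.card_le_card_of_injective χ hχ).trans hcard.le

end Cohomology

theorem natCast_le_rpow_of_mul_pow_dvd {m p d : ℕ} (hp : 0 < p)
    (hdvd : m * p ^ 3 ∣ p * p ^ d.choose 2) :
    (m : ℝ) ≤ (p : ℝ) ^ ((d : ℝ) * ((d : ℝ) - 1) / 2 - 2) := by
  have hmul : m * p ^ 3 = p * (m * p ^ 2) := by ring
  have hle : m * p ^ 2 ≤ p ^ d.choose 2 :=
    Nat.le_of_dvd (by positivity) (Nat.dvd_of_mul_dvd_mul_left hp (hmul ▸ hdvd))
  have hp' : (0 : ℝ) < p := Nat.cast_pos.2 hp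
  rw [← Nat.cast_choose_two, Real.rpow_sub hp', Real.rpow_natCast, Real.rpow_ofNat,
    le_div_iff₀ (by positivity)]
  exact_mod_cast hle

end SchurBound

/-- Corollary 3, second part: if moreover `G₂ᵖ = γ₂(G₂)`, then
`|M(G₂)| ≤ p ^ (d * (d - 1) / 2 - 2)`. -/
theorem schur_multiplier_bound_special_center_p_cube_large_Gp (p d : ℕ) (hp : p.Prime)
    (hodd : p ≠ 2)
    (G : Type) [Group G] [Finite G] [Group.IsNilpotent G]
    (hpG : IsPGroup p G)
    (hc : Group.nilpotencyClass G = 2)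
    (hzc : Subgroup.center G = commutator G)
    (hzf : Subgroup.center G = frattini G)
    (hz : Nat.card (Subgroup.center G) = p ^ 3)
    (hbig : p ^ 13 ≤ Nat.card G)
    (hGp : Subgroup.closure (Set.range fun x : G => x ^ p) = commutator G)
    (hd : Group.rank G = d) :
    (Nat.card (schurMultiplier G) : ℝ) ≤ (p : ℝ) ^ ((d : ℝ) * ((d : ℝ) - 1) / 2 - 2) := by
  subst hd
  have : Fact p.Prime := ⟨hp⟩
  have hcard : Nat.card (commutator G) = p ^ 3 := hzc ▸ hz
  have hdvd : Nat.card (SchurBound.hopfSubgroup G) * p ^ 3 ∣ p * p ^ (Group.rank G).choose 2 :=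
    SchurBound.natCard_ker_inf_commutator_mul_dvd hodd hzc hGp hcard hbig
      (SchurBound.FreeCentralExtension.proj_surjective G)
      (SchurBound.FreeCentralExtension.ker_proj_le_center G)
  have : Finite (SchurBound.hopfSubgroup G) := Nat.finite_of_card_ne_zero <|
    left_ne_zero_of_mul <| ne_zero_of_dvd_ne_zero
      (mul_ne_zero hp.ne_zero (pow_ne_zero _ hp.ne_zero)) hdvd
  calc (Nat.card (schurMultiplier G) : ℝ) ≤ Nat.card (SchurBound.hopfSubgroup G) :=
        mod_cast SchurBound.natCard_schurMultiplier_le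
    _ ≤ (p : ℝ) ^ ((Group.rank G : ℝ) * ((Group.rank G : ℝ) - 1) / 2 - 2) :=
      SchurBound.natCast_le_rpow_of_mul_pow_dvd hp.pos hdvd
end

section
/- Let p be an odd prime and G a finite p-group of nilpotency class 2 with G^p ≤ γ₂(G) and G^p cyclic of order p. Then |M(G)| · p = |M(G/G^p)|, i.e., |M(G)| = |M(G/G^p)| / |G^p|. -/
/-!
For a surjection `π : G → Q` with central kernel `N ≤ γ₂(G)` and a trivial module `A`, the sequence
`0 → Hom(N, A) → H²(Q, A) → H²(G, A)` given by transgression and inflation is exact. When `A = ℂˣ`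
and `N` is finite abelian, `Hom(N, A)` has order `|N|`, so it remains to see that inflation is
surjective for `N = Gⁿ`.

A class in `H²(G, A)` is a central extension `E` of `G` by `A`. If the preimage `Ñ` of `N` in `E` is
central, then divisibility of `A` gives a retraction `Ñ → A`, and the pushout along it of the
central extension `Ñ → E → Q` is a class on `Q` that inflates to the given one.

The preimage of `Gⁿ` is central: since `G` has class 2, `n` is odd and `Gⁿ ≤ γ₂(G)`, commutators in
`E` satisfy `⁅xⁿ, g⁆ = ⁅x, g⁆ⁿ = ⁅x, gⁿ⁆`. For `x` mapping to an element whose `n`-th power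
generates `Gⁿ`, the element `gⁿ` is a power of `xⁿ` times a central element, so it commutes with
`x` and `xⁿ` is central.
-/

universe u

section Commutators

open scoped commutatorElement

variable {E : Type*} [Group E]

lemma commutatorElement_mul_right_of_mem_center {c y : E} (h : ⁅c, y⁆ ∈ Subgroup.center E)
    (x : E) : ⁅c, x * y⁆ = ⁅c, x⁆ * ⁅c, y⁆ := by
  rw [commutatorElement_mul_right_eq_mul_conj, mul_assoc, mul_assoc, ← mul_assoc x,
    Subgroup.mem_center_iff.1 h x, mul_inv_cancel_right]

lemma commutatorElement_pow_right_of_mem_center {c x : E} (h : ⁅c, x⁆ ∈ Subgroup.center E)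
    (n : ℕ) : ⁅c, x ^ n⁆ = ⁅c, x⁆ ^ n := by
  induction n with
  | zero => simp
  | succ n ih => rw [pow_succ, commutatorElement_mul_right_of_mem_center h, ih, pow_succ]

lemma mul_pow_of_commutatorElement_mem_center {x y : E} (h : ⁅y, x⁆ ∈ Subgroup.center E)
    (n : ℕ) : (x * y) ^ n = x ^ n * y ^ n * ⁅y, x⁆ ^ n.choose 2 := by
  have hcomm (m : ℕ) (g : E) : Commute (⁅y, x⁆ ^ m) g :=
    (Subgroup.mem_center_iff.1 (pow_mem h m) g).symm
  have hswap (m : ℕ) : y ^ m * x = ⁅y, x⁆ ^ m * (x * y ^ m) := by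
    have hinv : ⁅x, y⁆ ∈ Subgroup.center E := commutatorElement_inv y x ▸ inv_mem h
    rw [← commutatorElement_inv x y, inv_pow, ← commutatorElement_pow_right_of_mem_center hinv,
      commutatorElement_inv, commutatorElement_def]
    group
  induction n with
  | zero => simp
  | succ n ih =>
    calc (x * y) ^ (n + 1) = x ^ n * y ^ n * ⁅y, x⁆ ^ n.choose 2 * (x * y) := by rw [pow_succ, ih]
      _ = x ^ n * (y ^ n * x) * y * ⁅y, x⁆ ^ n.choose 2 := by
        rw [mul_assoc, (hcomm _ _).eq]; simp only [mul_assoc]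
      _ = ⁅y, x⁆ ^ n * (x ^ n * (x * y ^ n) * y * ⁅y, x⁆ ^ n.choose 2) := by
        rw [hswap, ← mul_assoc (x ^ n), ← (hcomm n (x ^ n)).eq]; simp only [mul_assoc]
      _ = x ^ (n + 1) * y ^ (n + 1) * ⁅y, x⁆ ^ (n + 1).choose 2 := by
        rw [(hcomm _ _).eq, Nat.choose_succ_succ' n 1, Nat.choose_one_right,
          add_comm n (n.choose (1 + 1)), pow_add _ (n.choose _), pow_succ x n, pow_succ y n]
        simp only [mul_assoc]

lemma mul_pow_of_odd {x y : E} {n : ℕ} (hn : Odd n) (h : ⁅y, x⁆ ∈ Subgroup.center E)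
    (hpow : ⁅y, x⁆ ^ n = 1) : (x * y) ^ n = x ^ n * y ^ n := by
  obtain ⟨m, rfl⟩ := hn
  have hchoose : (2 * m + 1).choose 2 = (2 * m + 1) * m := by
    rw [Nat.choose_two_right, Nat.add_sub_cancel, mul_left_comm, Nat.mul_div_cancel_left _ two_pos]
  rw [mul_pow_of_commutatorElement_mem_center h, hchoose, pow_mul, hpow, one_pow, mul_one]

lemma commutatorElement_pow_right_of_odd {g x : E} {n : ℕ} (hn : Odd n)
    (h : ⁅x, ⁅g, x⁆⁆ ∈ Subgroup.center E) (hpow : ⁅x, ⁅g, x⁆⁆ ^ n = 1) :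
    ⁅g, x ^ n⁆ = ⁅g, x⁆ ^ n := by
  have hconj : g * x * g⁻¹ = ⁅g, x⁆ * x := by rw [commutatorElement_def, inv_mul_cancel_right]
  rw [commutatorElement_def g, ← conj_pow, hconj, mul_pow_of_odd hn h hpow, mul_inv_cancel_right]

end Commutators

section CentralExtensions

open scoped commutatorElement

variable {E G : Type*} [Group E] [Group G] {π : E →* G}

lemma commutatorElement_mem_center_of_map_mem_center (hker : π.ker ≤ Subgroup.center E) {c : E}
    (hc : π c ∈ Subgroup.center G) (x : E) : ⁅c, x⁆ ∈ Subgroup.center E := by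
  refine hker ?_
  rw [MonoidHom.mem_ker, map_commutatorElement, commutatorElement_eq_one_iff_mul_comm]
  exact (Subgroup.mem_center_iff.1 hc _).symm

lemma commutator_comap_center_commutator_eq_bot (hker : π.ker ≤ Subgroup.center E) :
    ⁅commutator E, (Subgroup.center G).comap π⁆ = ⊥ := by
  have hcomap : ⁅(Subgroup.center G).comap π, ⊤⁆ ≤ Subgroup.center E :=
    Subgroup.commutator_le.2 fun c hc x _ =>
      commutatorElement_mem_center_of_map_mem_center hker hc x
  rw [commutator_def]
  apply Subgroup.commutator_commutator_eq_bot_of_rotate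
  · rwa [Subgroup.commutator_comm ⊤, Subgroup.commutator_top_right_eq_bot_iff_le_center]
  · rwa [Subgroup.commutator_top_right_eq_bot_iff_le_center]

lemma comap_commutator_le (hπ : Function.Surjective π) :
    (commutator G).comap π ≤ commutator E ⊔ π.ker := by
  rw [← Subgroup.comap_map_eq, commutator_def E, Subgroup.map_commutator,
    Subgroup.map_top_of_surjective π hπ, commutator_def]

lemma commute_of_map_mem_center_of_map_mem_commutator (hπ : Function.Surjective π)
    (hker : π.ker ≤ Subgroup.center E) {c d : E} (hc : π c ∈ Subgroup.center G)
    (hd : π d ∈ commutator G) : Commute c d := by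
  have hcent : commutator E ⊔ π.ker ≤ Subgroup.centralizer ((Subgroup.center G).comap π) :=
    sup_le (Subgroup.commutator_eq_bot_iff_le_centralizer.1
      (commutator_comap_center_commutator_eq_bot hker))
      (hker.trans (Subgroup.center_le_centralizer _))
  exact hcent (comap_commutator_le hπ hd) c hc

variable {n : ℕ}

lemma commutatorElement_pow_eq_one_of_map_mem_center (hπ : Function.Surjective π)
    (hker : π.ker ≤ Subgroup.center E) (hpow : ∀ x : G, x ^ n ∈ commutator G) {c : E}
    (hc : π c ∈ Subgroup.center G) (x : E) : ⁅c, x⁆ ^ n = 1 := by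
  rw [← commutatorElement_pow_right_of_mem_center
    (commutatorElement_mem_center_of_map_mem_center hker hc x)]
  exact (commute_of_map_mem_center_of_map_mem_commutator hπ hker hc
    (by rw [map_pow]; exact hpow _)).commutator_eq

lemma commutatorElement_pow_right_eq_pow (hn : Odd n) (hπ : Function.Surjective π)
    (hker : π.ker ≤ Subgroup.center E) (hG : commutator G ≤ Subgroup.center G)
    (hpow : ∀ x : G, x ^ n ∈ commutator G) (g x : E) : ⁅g, x ^ n⁆ = ⁅g, x⁆ ^ n := by
  have hc : π ⁅g, x⁆ ∈ Subgroup.center G := by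
    rw [map_commutatorElement]
    exact hG (Subgroup.commutator_mem_commutator (Subgroup.mem_top _) (Subgroup.mem_top _))
  refine commutatorElement_pow_right_of_odd hn ?_ ?_ <;> rw [← commutatorElement_inv]
  · exact inv_mem (commutatorElement_mem_center_of_map_mem_center hker hc x)
  · rw [inv_pow, commutatorElement_pow_eq_one_of_map_mem_center hπ hker hpow hc, inv_one]

lemma commutatorElement_pow_left_eq_pow_right (hn : Odd n) (hπ : Function.Surjective π)
    (hker : π.ker ≤ Subgroup.center E) (hG : commutator G ≤ Subgroup.center G)
    (hpow : ∀ x : G, x ^ n ∈ commutator G) (x g : E) : ⁅x ^ n, g⁆ = ⁅x, g ^ n⁆ := by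
  rw [commutatorElement_pow_right_eq_pow hn hπ hker hG hpow x g, ← commutatorElement_inv,
    commutatorElement_pow_right_eq_pow hn hπ hker hG hpow g x, ← inv_pow, commutatorElement_inv]

lemma mul_pow_of_odd_of_pow_mem_commutator (hn : Odd n) (hG : commutator G ≤ Subgroup.center G)
    (hpow : ∀ x : G, x ^ n ∈ commutator G) (x y : G) : (x * y) ^ n = x ^ n * y ^ n := by
  have hyx := hG (Subgroup.commutator_mem_commutator (Subgroup.mem_top y) (Subgroup.mem_top x))
  refine mul_pow_of_odd hn hyx ?_
  rw [← commutatorElement_pow_right_of_mem_center hyx, commutatorElement_eq_one_iff_mul_comm]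
  exact Subgroup.mem_center_iff.1 (hG (hpow x)) y

lemma exists_zpow_pow_eq_of_isCyclic (hmul : ∀ x y : G, (x * y) ^ n = x ^ n * y ^ n)
    [IsCyclic (Subgroup.closure (Set.range fun x : G => x ^ n))] :
    ∃ x₀ : G, ∀ y ∈ Subgroup.closure (Set.range fun x : G => x ^ n), ∃ m : ℤ,
      (x₀ ^ n) ^ m = y := by
  obtain ⟨⟨z, hz⟩, hgen⟩ :=
    IsCyclic.exists_generator (α := Subgroup.closure (Set.range fun x : G => x ^ n))
  have hrange : Subgroup.closure (Set.range fun x : G => x ^ n) ≤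
      (MonoidHom.mk' (fun x : G => x ^ n) hmul).range := (Subgroup.closure_le _).2 subset_rfl
  obtain ⟨x₀, rfl⟩ := hrange hz
  refine ⟨x₀, fun y hy => (hgen ⟨y, hy⟩).imp fun m hm => congrArg Subtype.val hm⟩

theorem comap_closure_pow_le_center (hn : Odd n) (hπ : Function.Surjective π)
    (hker : π.ker ≤ Subgroup.center E) (hG : commutator G ≤ Subgroup.center G)
    (hpow : ∀ x : G, x ^ n ∈ commutator G)
    [IsCyclic (Subgroup.closure (Set.range fun x : G => x ^ n))] :
    (Subgroup.closure (Set.range fun x : G => x ^ n)).comap π ≤ Subgroup.center E := by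
  obtain ⟨x₀, hx₀⟩ :=
    exists_zpow_pow_eq_of_isCyclic (mul_pow_of_odd_of_pow_mem_commutator hn hG hpow)
  obtain ⟨e₀, rfl⟩ := hπ x₀
  have hlift {e : E} (he : π e ∈ Subgroup.closure (Set.range fun x : G => x ^ n)) :
      ∃ m : ℤ, ∃ z ∈ Subgroup.center E, e = (e₀ ^ n) ^ m * z := by
    obtain ⟨m, hm⟩ := hx₀ _ he
    refine ⟨m, ((e₀ ^ n) ^ m)⁻¹ * e, hker ?_, (mul_inv_cancel_left _ _).symm⟩
    rw [MonoidHom.mem_ker, map_mul, map_inv, map_zpow, map_pow, hm, inv_mul_cancel]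
  have hcentral : e₀ ^ n ∈ Subgroup.center E := by
    rw [Subgroup.mem_center_iff]
    intro g
    obtain ⟨m, z, hz, hgz⟩ := hlift (e := g ^ n)
      (by rw [map_pow]; exact Subgroup.subset_closure ⟨_, rfl⟩)
    have hcomm : Commute e₀ (g ^ n) := by
      rw [hgz]
      exact (((Commute.refl e₀).pow_right n).zpow_right m).mul_right
        (Subgroup.mem_center_iff.1 hz e₀)
    have := hcomm.commutator_eq
    rw [← commutatorElement_pow_left_eq_pow_right hn hπ hker hG hpow] at this
    exact (commutatorElement_eq_one_iff_commute.1 this).symm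
  intro e he
  obtain ⟨m, z, hz, rfl⟩ := hlift he
  exact mul_mem (zpow_mem hcentral m) hz

end CentralExtensions

section CommutativeGroups

open scoped IsMulCommutative

lemma isMulCommutative_of_le_center {E : Type*} [Group E] {N : Subgroup E}
    (hN : N ≤ Subgroup.center E) : IsMulCommutative N :=
  Subgroup.le_centralizer_iff_isMulCommutative.1 (hN.trans (Subgroup.center_le_centralizer _))

lemma exists_addMonoidHom_comp_eq_self {A : Type u} [AddCommGroup A] [DivisibleBy A ℤ] {N : Type u}
    [Group N] [IsMulCommutative N] {i : Multiplicative A →* N} (hi : Function.Injective i) :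
    ∃ ρ : Additive N →+ A, ∀ a : A, ρ (.ofMul (i (.ofAdd a))) = a := by
  obtain ⟨ρ, hρ⟩ := (Module.Baer.of_divisible A).extension_property_addMonoidHom
    (AddMonoidHom.toMultiplicativeLeft.symm i) hi (.id A)
  exact ⟨ρ, DFunLike.congr_fun hρ⟩

noncomputable instance {K : Type*} [Field K] [IsAlgClosed K] : DivisibleBy (Additive Kˣ) ℤ :=
  have : DivisibleBy (Additive Kˣ) ℕ := divisibleByOfSMulRightSurj _ _ fun {n} hn x => by
    obtain ⟨z, hz⟩ := IsAlgClosed.exists_pow_nat_eq (x.toMul : K) hn.bot_lt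
    have hz0 : z ≠ 0 := by
      rintro rfl
      exact x.toMul.ne_zero (by rw [← hz, zero_pow hn])
    exact ⟨.ofMul (Units.mk0 z hz0), Additive.toMul.injective (Units.ext hz)⟩
  AddGroup.divisibleByIntOfDivisibleByNat _

lemma card_addMonoidHom_additive_units (N M : Type*) [Group N] [IsMulCommutative N] [Finite N]
    [CommMonoid M] [HasEnoughRootsOfUnity M (Monoid.exponent N)] :
    Nat.card (Additive N →+ Additive Mˣ) = Nat.card N :=
  (Nat.card_congr MonoidHom.toAdditive).symm.trans
    (CommGroup.card_monoidHom_of_hasEnoughRootsOfUnity N M)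

end CommutativeGroups

section Inflation

open groupCohomology CategoryTheory

variable {k G Q : Type u} [CommRing k] [Group G] [Group Q]
  {A : Type u} [AddCommGroup A] [Module k A]

lemma mem_cocycles₂_trivial_iff (f : G × G → A) :
    f ∈ cocycles₂ (Rep.trivial k G A) ↔
      ∀ g h j : G, f (g * h, j) + f (g, h) = f (h, j) + f (g, h * j) :=
  mem_cocycles₂_iff (A := Rep.trivial k G A) f

lemma cocycles₂_trivial_map_one_fst (f : cocycles₂ (Rep.trivial k G A)) (g : G) :
    f (1, g) = f (1, 1) :=
  cocycles₂_map_one_fst f g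

lemma cocycles₂_trivial_map_one_snd (f : cocycles₂ (Rep.trivial k G A)) (g : G) :
    f (g, 1) = f (1, 1) :=
  cocycles₂_map_one_snd f g

lemma H2π_trivial_eq_iff (f f' : cocycles₂ (Rep.trivial k G A)) :
    H2π (Rep.trivial k G A) f = H2π (Rep.trivial k G A) f' ↔
      ∃ x : G → A, ∀ g h : G, x h - x (g * h) + x g = f (g, h) - f' (g, h) := by
  rw [H2π_eq_iff]
  exact ⟨fun ⟨x, hx⟩ => ⟨x, fun g h => congrFun hx (g, h)⟩,
    fun ⟨x, hx⟩ => ⟨x, funext fun z => hx z.1 z.2⟩⟩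

lemma H2π_trivial_eq_zero_iff (f : cocycles₂ (Rep.trivial k G A)) :
    H2π (Rep.trivial k G A) f = 0 ↔
      ∃ x : G → A, ∀ g h : G, x h - x (g * h) + x g = f (g, h) := by
  rw [H2π_eq_zero_iff]
  exact ⟨fun ⟨x, hx⟩ => ⟨x, fun g h => congrFun hx (g, h)⟩,
    fun ⟨x, hx⟩ => ⟨x, funext fun z => hx z.1 z.2⟩⟩

/-- Inflation of 2-cocycles with trivial coefficients: the pullback along `π × π`. -/
noncomputable def cocycleInflation (π : G →* Q) :
    cocycles₂ (Rep.trivial k Q A) →ₗ[k] cocycles₂ (Rep.trivial k G A) :=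
  (mapCocycles₂ (A := Rep.trivial k Q A) π (𝟙 (Rep.trivial k G A))).hom

@[simp]
lemma cocycleInflation_apply (π : G →* Q) (f : cocycles₂ (Rep.trivial k Q A)) (g h : G) :
    cocycleInflation π f (g, h) = f (π g, π h) := rfl

variable (k A) in
/-- The inflation map `H²(Q, A) → H²(G, A)` induced by `π : G → Q`, for trivial coefficients. -/
noncomputable def inflation (π : G →* Q) :
    H2 (Rep.trivial k Q A) →ₗ[k] H2 (Rep.trivial k G A) :=
  (groupCohomology.map (A := Rep.trivial k Q A) π (𝟙 (Rep.trivial k G A)) 2).hom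

lemma inflation_H2π (π : G →* Q) (f : cocycles₂ (Rep.trivial k Q A)) :
    inflation k A π (H2π (Rep.trivial k Q A) f) =
      H2π (Rep.trivial k G A) (cocycleInflation π f) :=
  H2π_comp_map_apply (A := Rep.trivial k Q A) π (𝟙 (Rep.trivial k G A)) f

end Inflation

section FactorSet

variable {G Q : Type*} [Group G] [Group Q] {π : G →* Q} (hπ : Function.Surjective π)

/-- The component of `g` in `π.ker` relative to the section `Function.surjInv hπ` of `π`. -/
noncomputable def kerPart (g : G) : π.ker :=
  ⟨(Function.surjInv hπ (π g))⁻¹ * g, by simp [MonoidHom.mem_ker, Function.surjInv_eq]⟩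

lemma kerPart_mul_coe (g : G) (m : π.ker) : kerPart hπ (g * m) = kerPart hπ g * m := by
  ext
  simp [kerPart, MonoidHom.mem_ker.1 m.2, mul_assoc]

/-- The factor set of the extension `π.ker → G → Q` for the section `Function.surjInv hπ`. -/
noncomputable def factorSet (q r : Q) : π.ker :=
  kerPart hπ (Function.surjInv hπ q * Function.surjInv hπ r)

lemma surjInv_mul_kerPart (g : G) : Function.surjInv hπ (π g) * kerPart hπ g = g :=
  mul_inv_cancel_left _ _

lemma kerPart_mul (hker : π.ker ≤ Subgroup.center G) (g h : G) :
    kerPart hπ (g * h) = factorSet hπ (π g) (π h) * (kerPart hπ g * kerPart hπ h) := by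
  rw [factorSet, ← kerPart_mul_coe]
  congr 1
  conv_lhs => rw [← surjInv_mul_kerPart hπ g, ← surjInv_mul_kerPart hπ h]
  rw [Subgroup.coe_mul, mul_assoc, ← mul_assoc (kerPart hπ g : G),
    ← Subgroup.mem_center_iff.1 (hker (kerPart hπ g).2)]
  simp only [mul_assoc]

end FactorSet

section Transgression

open groupCohomology

variable {k G Q : Type u} [CommRing k] [Group G] [Group Q]
  {A : Type u} [AddCommGroup A] [Module k A]
  {π : G →* Q} (hπ : Function.Surjective π) (hker : π.ker ≤ Subgroup.center G)

include hker in
lemma map_factorSet (χ : Additive π.ker →+ A) (g h : G) :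
    χ (.ofMul (factorSet hπ (π g) (π h))) = χ (.ofMul (kerPart hπ (g * h))) -
      χ (.ofMul (kerPart hπ g)) - χ (.ofMul (kerPart hπ h)) := by
  rw [kerPart_mul hπ hker, ofMul_mul, ofMul_mul, map_add, map_add]
  abel

variable (k) in
/-- The image under `χ : π.ker → A` of the factor set of the central extension `π`, as a
2-cocycle. -/
noncomputable def transgressionCocycle :
    (Additive π.ker →+ A) →ₗ[k] cocycles₂ (Rep.trivial k Q A) where
  toFun χ := ⟨fun x => χ (.ofMul (factorSet hπ x.1 x.2)), by
    rw [mem_cocycles₂_trivial_iff, hπ.forall₃]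
    intro g h j
    simp only [← map_mul, map_factorSet hπ hker, mul_assoc]
    abel⟩
  map_add' _ _ := rfl
  map_smul' _ _ := rfl

lemma transgressionCocycle_map (χ : Additive π.ker →+ A) (g h : G) :
    transgressionCocycle k hπ hker χ (π g, π h) = (χ (.ofMul (kerPart hπ (g * h))) -
      χ (.ofMul (kerPart hπ g)) - χ (.ofMul (kerPart hπ h)) : A) :=
  map_factorSet hπ hker χ g h

variable (k A) in
/-- The transgression `Hom(π.ker, A) → H²(Q, A)` of the central extension `π`, with the sign for
which `χ` goes to the class of the pushout of the extension along `χ`. -/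
noncomputable def transgression : (Additive π.ker →+ A) →ₗ[k] H2 (Rep.trivial k Q A) :=
  (H2π (Rep.trivial k Q A)).hom ∘ₗ transgressionCocycle k hπ hker

lemma map_kerPart_coe (χ : Additive π.ker →+ A) (m : π.ker) :
    χ (.ofMul (kerPart hπ (m : G))) = χ (.ofMul (kerPart hπ 1)) + χ (.ofMul m) := by
  rw [← one_mul (m : G), kerPart_mul_coe, ofMul_mul, map_add]

theorem transgression_injective (hcomm : π.ker ≤ commutator G) :
    Function.Injective (transgression k A hπ hker) := by
  rw [injective_iff_map_eq_zero]
  intro χ hχ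
  obtain ⟨ψ, hψ⟩ := (H2π_trivial_eq_zero_iff _).1 hχ
  let Φ : G →* Multiplicative A :=
    MonoidHom.mk' (fun g => .ofAdd (χ (.ofMul (kerPart hπ g)) + ψ (π g))) fun g h => by
      have h' := hψ (π g) (π h)
      rw [transgressionCocycle_map, ← map_mul, sub_sub, eq_sub_iff_add_eq] at h'
      rw [← ofAdd_add, ← h']
      congr 1
      abel
  have hΦ (m : π.ker) : χ (.ofMul (kerPart hπ (m : G))) + ψ 1 = 0 := by
    have : χ (.ofMul (kerPart hπ (m : G))) + ψ (π m) = 0 :=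
      Abelianization.commutator_subset_ker Φ (hcomm m.2)
    rwa [MonoidHom.mem_ker.1 m.2] at this
  ext m
  have := (hΦ m).trans (hΦ 1).symm
  rw [map_kerPart_coe, map_kerPart_coe, ofMul_one, map_zero] at this
  simpa using this

lemma range_transgression_le_ker_inflation :
    (transgression k A hπ hker).range ≤ (inflation k A π).ker := by
  rintro _ ⟨χ, rfl⟩
  refine (inflation_H2π π _).trans ((H2π_trivial_eq_zero_iff _).2
    ⟨fun g => -χ (.ofMul (kerPart hπ g)), fun g h => ?_⟩)
  rw [cocycleInflation_apply, transgressionCocycle_map, sub_neg_eq_add, neg_add_eq_sub,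
    ← sub_eq_add_neg, sub_right_comm]

lemma map_mul_ker_of_coboundary_eq {f : cocycles₂ (Rep.trivial k Q A)} {φ : G → A}
    (hφ : ∀ g h : G, φ h - φ (g * h) + φ g = f (π g, π h)) (g : G) (m : π.ker) :
    φ (g * m) = φ g + (φ m - φ 1) := by
  have hm := hφ g m
  rw [MonoidHom.mem_ker.1 m.2, ← map_one π, map_one π, cocycles₂_trivial_map_one_snd,
    ← map_one π, ← hφ 1 1, one_mul, sub_self, zero_add] at hm
  rw [← hm]
  abel

theorem range_transgression :
    (transgression k A hπ hker).range = (inflation k A π).ker := by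
  refine le_antisymm (range_transgression_le_ker_inflation hπ hker) fun y hy => ?_
  induction y using H2_induction_on with | _ f
  obtain ⟨φ, hφ⟩ := (H2π_trivial_eq_zero_iff _).1 ((inflation_H2π π f).symm.trans hy)
  have hφ_mul (g : G) (m : π.ker) : φ (g * m) = φ g + (φ m - φ 1) :=
    map_mul_ker_of_coboundary_eq hφ g m
  let χ : Additive π.ker →+ A := AddMonoidHom.mk' (fun m => φ 1 - φ (m.toMul : G)) fun m m' => by
    simp only [toMul_add, Subgroup.coe_mul, hφ_mul]
    abel
  have hφ_eq (g : G) :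
      φ g = φ (Function.surjInv hπ (π g)) - χ (.ofMul (kerPart hπ g)) := by
    conv_lhs => rw [← surjInv_mul_kerPart hπ g, hφ_mul]
    rw [AddMonoidHom.mk'_apply, toMul_ofMul, sub_sub_eq_add_sub, add_sub_assoc]
  refine ⟨χ, ((H2π_trivial_eq_iff _ _).2 ⟨fun q => φ (Function.surjInv hπ q), ?_⟩).symm⟩
  rw [hπ.forall₂]
  intro g h
  have ht := transgressionCocycle_map (k := k) hπ hker χ g h
  have hf := hφ g h
  rw [hφ_eq g, hφ_eq h, hφ_eq (g * h)] at hf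
  rw [← map_mul]
  exact Eq.trans (by abel) (congrArg₂ (· - ·) hf ht.symm)

end Transgression

section CocycleExtension

open groupCohomology

variable {k G Q : Type u} [CommRing k] [Group G] [Group Q]
  {A : Type u} [AddCommGroup A] [Module k A]

/-- The central extension of `G` by `A` with factor set `f`. As `f` need not be normalized, the
identity is `(-f (1, 1), 1)`. -/
@[ext]
structure CocycleExtension (f : cocycles₂ (Rep.trivial k G A)) where
  left : A
  right : G

namespace CocycleExtension

variable {f : cocycles₂ (Rep.trivial k G A)}

instance : Mul (CocycleExtension f) where
  mul x y := ⟨x.left + y.left + f (x.right, y.right), x.right * y.right⟩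

instance : One (CocycleExtension f) where
  one := ⟨-f (1, 1), 1⟩

instance : Inv (CocycleExtension f) where
  inv x := ⟨-x.left - f (x.right⁻¹, x.right) - f (1, 1), x.right⁻¹⟩

@[simp]
lemma mul_left (x y : CocycleExtension f) :
    (x * y).left = x.left + y.left + f (x.right, y.right) := rfl

@[simp]
lemma mul_right (x y : CocycleExtension f) : (x * y).right = x.right * y.right := rfl

@[simp]
lemma one_left : (1 : CocycleExtension f).left = -f (1, 1) := rfl

@[simp]
lemma one_right : (1 : CocycleExtension f).right = 1 := rfl

@[simp]
lemma inv_left (x : CocycleExtension f) :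
    x⁻¹.left = -x.left - f (x.right⁻¹, x.right) - f (1, 1) := rfl

@[simp]
lemma inv_right (x : CocycleExtension f) : x⁻¹.right = x.right⁻¹ := rfl

instance : Group (CocycleExtension f) := Group.ofLeftAxioms
  (fun x y z => by
    ext
    · have hf : f (x.right * y.right, z.right) + f (x.right, y.right) =
          f (y.right, z.right) + f (x.right, y.right * z.right) :=
        (mem_cocycles₂_trivial_iff _).1 f.2 x.right y.right z.right
      rw [← sub_eq_zero] at hf ⊢
      simp only [mul_left, mul_right]
      rw [← hf]
      abel
    · exact mul_assoc _ _ _)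
  (fun x => by
    ext
    · simp [cocycles₂_trivial_map_one_fst f x.right]
    · exact one_mul _)
  (fun x => by
    ext
    · simp only [mul_left, inv_left, inv_right, one_left]
      abel
    · exact inv_mul_cancel _)

variable (f) in
/-- The projection of the extension onto `G`. -/
def rightHom : CocycleExtension f →* G where
  toFun := right
  map_one' := rfl
  map_mul' _ _ := rfl

variable (f) in
/-- The inclusion of `A`; subtracting `f (1, 1)` makes it a homomorphism. -/
def inl : Multiplicative A →* CocycleExtension f where
  toFun a := ⟨a.toAdd - f (1, 1), 1⟩
  map_one' := by
    ext
    · simp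
    · rfl
  map_mul' a b := by
    ext
    · simp only [toAdd_mul, mul_left]
      abel
    · exact (one_mul 1).symm

lemma inl_injective : Function.Injective (inl f) := fun _ _ h =>
  sub_left_injective (G := A) (congrArg left h)

variable (f) in
/-- The set-theoretic section `g ↦ (0, g)`, whose factor set is `f`. -/
def lift (g : G) : CocycleExtension f := ⟨0, g⟩

lemma lift_mul_lift (g h : G) :
    lift f g * lift f h = lift f (g * h) * inl f (.ofAdd (f (g, h))) := by
  ext
  · simp [lift, inl, cocycles₂_trivial_map_one_snd f (g * h)]
  · exact (mul_one _).symm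

lemma rightHom_surjective : Function.Surjective (rightHom f) := fun g => ⟨lift f g, rfl⟩

lemma ker_rightHom_le_center : (rightHom f).ker ≤ Subgroup.center (CocycleExtension f) := by
  intro x hx
  have hx : x.right = 1 := hx
  refine Subgroup.mem_center_iff.2 fun y => ?_
  ext
  · simp [hx, cocycles₂_trivial_map_one_fst f y.right, cocycles₂_trivial_map_one_snd f y.right,
      add_comm]
  · simp [hx]

end CocycleExtension

open CocycleExtension

variable {π : G →* Q} (hπ : Function.Surjective π)

lemma inflation_transgression_comp_rightHom {f : cocycles₂ (Rep.trivial k G A)}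
    (hcent : (π.comp (rightHom f)).ker ≤ Subgroup.center (CocycleExtension f))
    {ρ : Additive (π.comp (rightHom f)).ker →+ A}
    (hρ : ∀ a : A, ρ (.ofMul ⟨inl f (.ofAdd a), map_one π⟩) = a) :
    inflation k A π (transgression k A (π := π.comp (rightHom f))
      (hπ.comp rightHom_surjective) hcent ρ) = H2π (Rep.trivial k G A) f := by
  have hsurj : Function.Surjective (π.comp (rightHom f)) := hπ.comp rightHom_surjective
  refine (inflation_H2π π _).trans ((H2π_trivial_eq_iff _ _).2
    ⟨fun g => ρ (.ofMul (kerPart hsurj (lift f g))), fun g h => ?_⟩).symm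
  have hlift : ρ (.ofMul (kerPart hsurj (lift f g * lift f h))) =
      ρ (.ofMul (kerPart hsurj (lift f (g * h)))) + f (g, h) := by
    have hmul := kerPart_mul_coe hsurj (lift f (g * h))
      ⟨inl f (.ofAdd (f (g, h))), map_one π⟩
    rw [lift_mul_lift, hmul, ofMul_mul, map_add, hρ]
  have ht := transgressionCocycle_map (k := k) hsurj hcent ρ (lift f g) (lift f h)
  rw [hlift] at ht
  exact Eq.trans (by abel) (congrArg (f (g, h) - ·) ht.symm)

include hπ in
theorem inflation_surjective [DivisibleBy A ℤ]
    (hcent : ∀ f : cocycles₂ (Rep.trivial k G A),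
      π.ker.comap (rightHom f) ≤ Subgroup.center (CocycleExtension f)) :
    Function.Surjective (inflation k A π) := by
  intro y
  induction y using H2_induction_on with | _ f
  have hcent' : (π.comp (rightHom f)).ker ≤ Subgroup.center (CocycleExtension f) := hcent f
  have := isMulCommutative_of_le_center hcent'
  let i : Multiplicative A →* (π.comp (rightHom f)).ker :=
    (inl f).codRestrict _ fun _ => map_one π
  have hi : Function.Injective i := fun _ _ h => inl_injective (congrArg Subtype.val h)
  obtain ⟨ρ, hρ⟩ := exists_addMonoidHom_comp_eq_self hi
  exact ⟨_, inflation_transgression_comp_rightHom hπ hcent' hρ⟩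

end CocycleExtension

section Counting

open CocycleExtension groupCohomology

theorem card_H2_mul_card_addMonoidHom_ker {k G Q A : Type u} [CommRing k] [Group G] [Group Q]
    [AddCommGroup A] [Module k A] {π : G →* Q} (hπ : Function.Surjective π)
    (hker : π.ker ≤ Subgroup.center G) (hcomm : π.ker ≤ commutator G)
    (hsurj : Function.Surjective (inflation k A π)) :
    Nat.card (H2 (Rep.trivial k G A)) * Nat.card (Additive π.ker →+ A) =
      Nat.card (H2 (Rep.trivial k Q A)) := by
  have hquot := Nat.card_congr ((inflation k A π).quotKerEquivOfSurjective hsurj).toEquiv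
  have hker_card : Nat.card (Additive π.ker →+ A) = Nat.card (inflation k A π).ker := by
    rw [← range_transgression hπ hker]
    exact Nat.card_congr (LinearEquiv.ofInjective (transgression k A hπ hker)
      (transgression_injective hπ hker hcomm)).toEquiv
  rw [Submodule.card_eq_card_quotient_mul_card (inflation k A π).ker, hquot, hker_card, mul_comm]

theorem card_schurMultiplier_mul_card_ker {G Q : Type} [Group G] [Group Q] {π : G →* Q}
    (hπ : Function.Surjective π) (hker : π.ker ≤ Subgroup.center G)
    (hcomm : π.ker ≤ commutator G) [Finite π.ker]
    (hcent : ∀ f : cocycles₂ (Rep.trivial ℤ G (Additive ℂˣ)),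
      π.ker.comap (rightHom f) ≤ Subgroup.center (CocycleExtension f)) :
    Nat.card (schurMultiplier G) * Nat.card π.ker = Nat.card (schurMultiplier Q) := by
  have := isMulCommutative_of_le_center hker
  have : NeZero (Monoid.exponent π.ker) := ⟨Monoid.exponent_ne_zero_of_finite⟩
  rw [← card_addMonoidHom_additive_units π.ker ℂ]
  exact card_H2_mul_card_addMonoidHom_ker hπ hker hcomm (inflation_surjective hπ hcent)

end Counting

lemma commutator_le_center_of_nilpotencyClass_eq_two {G : Type*} [Group G] [Group.IsNilpotent G]
    (hc : Group.nilpotencyClass G = 2) : commutator G ≤ Subgroup.center G := by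
  have h := Subgroup.lowerCentralSeries_nilpotencyClass (G := G)
  rwa [hc, Subgroup.lowerCentralSeries_succ, Subgroup.top_lowerCentralSeries_one,
    Subgroup.commutator_top_right_eq_bot_iff_le_center] at h

theorem schur_multiplier_quotient_Gp_general {n : ℕ} (hn : Odd n) {G : Type} [Group G]
    (hG : commutator G ≤ Subgroup.center G)
    (hGn : Subgroup.closure (Set.range fun x : G => x ^ n) ≤ commutator G)
    [IsCyclic (Subgroup.closure (Set.range fun x : G => x ^ n))]
    [Finite (Subgroup.closure (Set.range fun x : G => x ^ n))]
    [(Subgroup.closure (Set.range fun x : G => x ^ n)).Normal] :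
    Nat.card (schurMultiplier G) * Nat.card (Subgroup.closure (Set.range fun x : G => x ^ n)) =
      Nat.card (schurMultiplier (G ⧸ Subgroup.closure (Set.range fun x : G => x ^ n))) := by
  set N := Subgroup.closure (Set.range fun x : G => x ^ n)
  have hN : (QuotientGroup.mk' N).ker = N := QuotientGroup.ker_mk' N
  have : Finite (QuotientGroup.mk' N).ker := hN.symm ▸ inferInstance
  rw [← card_schurMultiplier_mul_card_ker (QuotientGroup.mk'_surjective N)
    (hN.trans_le (hGn.trans hG)) (hN.trans_le hGn), hN]
  intro f
  rw [hN]
  exact comap_closure_pow_le_center hn CocycleExtension.rightHom_surjective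
    CocycleExtension.ker_rightHom_le_center hG
    fun x => hGn (Subgroup.subset_closure ⟨x, rfl⟩)

/-- If `p` is an odd prime and `G` is a finite `p`-group of nilpotency class 2 with
`Gᵖ ≤ γ₂(G)` and `Gᵖ` cyclic of order `p`, then `|M(G)| ⬝ p = |M(G / Gᵖ)|`.
(The subgroup `Gᵖ` is central, hence normal; normality is recorded as an
instance argument so that the quotient group `G ⧸ Gᵖ` can be formed.) -/
theorem schur_multiplier_quotient_Gp (p : ℕ) (hp : p.Prime) (hodd : p ≠ 2)
    (G : Type) [Group G] [Finite G] [Group.IsNilpotent G]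
    (hpG : IsPGroup p G)
    (hc : Group.nilpotencyClass G = 2)
    (hGp : Subgroup.closure (Set.range fun x : G => x ^ p) ≤ commutator G)
    (hcyc : IsCyclic ↥(Subgroup.closure (Set.range fun x : G => x ^ p)))
    (hord : Nat.card ↥(Subgroup.closure (Set.range fun x : G => x ^ p)) = p)
    [hnorm : (Subgroup.closure (Set.range fun x : G => x ^ p)).Normal] :
    Nat.card (schurMultiplier G) * p =
      Nat.card (schurMultiplier
        (G ⧸ Subgroup.closure (Set.range fun x : G => x ^ p))) := by
  have h := schur_multiplier_quotient_Gp_general (hp.odd_of_ne_two hodd)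
    (commutator_le_center_of_nilpotencyClass_eq_two hc) hGp
  rwa [hord] at h
end

section
/- Let p be a prime and G a non-abelian finite p-group of order p^n with derived subgroup of order p^k and minimal number of generators d. Then |M(G)| ≤ p^{(1/2)(d-1)(n+k) − (d−2)}. -/
/-!
Let `N` be a central subgroup of `G` contained in the derived subgroup `G'`. Commutators of lifts in
central extensions by `ℂˣ` give a homomorphism `M(G) → Hom(G, Hom(N, ℂˣ))` whose kernel consists
of classes inflated from `M(G/N)`. Inflation kills the image of the injective transgression
`Hom(N, ℂˣ) → M(G/N)`, so `|M(G)| |N|` is at most `|M(G/N)|` times the number of pairings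
`G → Hom(N, ℂˣ)` that occur. At most `|N| ^ d` occur in general, but only `|N| ^ 2` when `N = G'` is
cyclic, generated by `⁅x, y⁆`: the pairing then kills the centralizer of `{x, y}`, which generates
`G` together with `x` and `y`. Induction on `|G'|` reduces the bound to
`|M(A)| ^ 2 * |A| ≤ |A| ^ d(A)` for abelian `A`.
-/

namespace SchurMultiplier

open Subgroup
open scoped commutatorElement IsMulCommutative

section Cohomology

variable (G C : Type*) [Group G] [CommGroup C]

/-- The group `Z²(G, C)` of 2-cocycles for the trivial action of `G` on `C`, written
multiplicatively and in curried form; cocycles are not assumed to be normalized. -/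
def TwoCocycle : Subgroup (G → G → C) where
  carrier := {f | ∀ x y z, f x y * f (x * y) z = f y z * f x (y * z)}
  one_mem' _ _ _ := rfl
  mul_mem' {f g} hf hg x y z := by
    simp only [Pi.mul_apply]
    rw [mul_mul_mul_comm, hf, hg, mul_mul_mul_comm]
  inv_mem' {f} hf x y z := by
    simp only [Pi.inv_apply]
    rw [← mul_inv, hf, mul_inv]

instance : CoeFun (TwoCocycle G C) fun _ => G → G → C := ⟨Subtype.val⟩

/-- The coboundary map `δ : C¹(G, C) → Z²(G, C)`. -/
def coboundary : (G → C) →* TwoCocycle G C where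
  toFun h := ⟨fun x y => h x * h y / h (x * y), fun x y z => by
    simp only [div_mul_div_comm, mul_assoc, div_eq_div_iff_mul_eq_mul]
    simp only [mul_left_comm]⟩
  map_one' := by ext; simp
  map_mul' a b := by
    ext x y
    simp only [Pi.mul_apply, Subgroup.coe_mul]
    rw [mul_mul_mul_comm, mul_div_mul_comm]

/-- The second cohomology group `H²(G, C)` for the trivial action of `G` on `C`. The Schur
multiplier of `G` is the case `C = ℂˣ`. -/
abbrev H2 : Type _ := TwoCocycle G C ⧸ (coboundary G C).range

variable {G C}

@[simp]
theorem coboundary_apply (h : G → C) (x y : G) :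
    coboundary G C h x y = h x * h y / h (x * y) := rfl

@[ext]
theorem TwoCocycle.ext {f g : TwoCocycle G C} (h : ∀ x y, f x y = g x y) : f = g :=
  Subtype.ext (funext₂ h)

theorem TwoCocycle.apply_one_left (f : TwoCocycle G C) (x : G) : f 1 x = f 1 1 := by
  simpa using (f.2 1 1 x).symm

theorem TwoCocycle.apply_one_right (f : TwoCocycle G C) (x : G) : f x 1 = f 1 1 := by
  simpa using f.2 x 1 1

instance [Subsingleton G] : Subsingleton (H2 G C) := by
  refine QuotientGroup.subsingleton_iff.2 (eq_top_iff.2 fun f _ => ⟨fun _ => f 1 1, ?_⟩)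
  ext x y
  simp [Subsingleton.elim x 1, Subsingleton.elim y 1]

/-- Pullback `Z²(Q, C) → Z²(G, C)` of cocycles along a homomorphism `φ : G → Q`. -/
def TwoCocycle.comap {Q : Type*} [Group Q] (φ : G →* Q) : TwoCocycle Q C →* TwoCocycle G C where
  toFun f := ⟨fun x y => f (φ x) (φ y), fun x y z => by simpa using f.2 (φ x) (φ y) (φ z)⟩
  map_one' := rfl
  map_mul' _ _ := rfl

/-- Pullback `H²(Q, C) → H²(G, C)` along a homomorphism `φ : G → Q`; this is inflation when `φ`
is a quotient map. -/
def inflation {Q : Type*} [Group Q] (φ : G →* Q) : H2 Q C →* H2 G C :=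
  QuotientGroup.map _ _ (TwoCocycle.comap φ) <| by
    rintro _ ⟨h, rfl⟩
    exact ⟨h ∘ φ, by ext; simp [TwoCocycle.comap]⟩

end Cohomology

open groupCohomology in
theorem card_schurMultiplier (G : Type) [Group G] :
    Nat.card (schurMultiplier G) = Nat.card (H2 G ℂˣ) := by
  let A := Rep.trivial ℤ G (Additive ℂˣ)
  let toCocycles : TwoCocycle G ℂˣ →* Multiplicative (cocycles₂ A) :=
    { toFun f := .ofAdd ⟨fun q => .ofMul (f q.1 q.2), (mem_cocycles₂_iff _).2
        fun x y z => (mul_comm (f (x * y) z) (f x y)).trans (f.2 x y z)⟩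
      map_one' := rfl
      map_mul' _ _ := rfl }
  let toH2 : TwoCocycle G ℂˣ →* Multiplicative (groupCohomology.H2 A) :=
    (AddMonoidHom.toMultiplicative (H2π A).hom.toAddMonoidHom).comp toCocycles
  have toH2_surjective : Function.Surjective toH2 := by
    intro c
    induction c using H2_induction_on with
    | h f =>
      let F : G × G → ℂˣ := fun q => Additive.toMul (α := ℂˣ) (f.1 q)
      refine ⟨⟨fun x y => F (x, y), fun x y z => ?_⟩, rfl⟩
      have h : F (x * y, z) * F (x, y) = F (y, z) * F (x, y * z) :=
        (mem_cocycles₂_iff f.1).1 f.2 x y z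
      rwa [mul_comm]
  have coboundary_eq_d₁₂ (h : G → ℂˣ) (x y : G) :
      Additive.ofMul (coboundary G ℂˣ h x y) =
        d₁₂ A (fun g => Additive.ofMul (h g)) (x, y) := by
    change h x * h y / h (x * y) = h y / h (x * y) * h x
    rw [mul_comm, mul_div_right_comm]
  have ker_toH2 : toH2.ker = (coboundary G ℂˣ).range := by
    ext f
    change H2π A (toCocycles f).toAdd = 0 ↔ _
    rw [H2π_eq_zero_iff]
    constructor
    · rintro ⟨h, hh⟩
      refine ⟨fun g => Additive.toMul (α := ℂˣ) (h g), ?_⟩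
      ext x y : 1
      exact (coboundary_eq_d₁₂ _ x y).trans (congrFun hh (x, y))
    · rintro ⟨h, rfl⟩
      exact ⟨fun g => Additive.ofMul (h g), funext fun q => (coboundary_eq_d₁₂ h q.1 q.2).symm⟩
  have index_ker := Subgroup.index_ker toH2
  rw [ker_toH2, MonoidHom.range_eq_top.2 toH2_surjective, card_top] at index_ker
  exact index_ker.symm

section FactorSet

variable {E Q C : Type*} [Group E] [Group Q] [CommGroup C] {K : Subgroup E} (hK : K ≤ center E)

/-- The factor set of a map `σ : Q → E` that is multiplicative up to a central subgroup `K`, pushed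
forward along a character `χ` of `K`. It is a homomorphism in `χ`. -/
def factorSet (σ : Q → E) (hσ : ∀ x y, σ x * σ y * (σ (x * y))⁻¹ ∈ K) :
    (K →* C) →* TwoCocycle Q C where
  toFun χ := ⟨fun x y => χ ⟨_, hσ x y⟩, fun x y z => by
    rw [← map_mul, ← map_mul]
    congr 1
    ext
    have central := mem_center_iff.1 (hK (hσ y z)) (σ x)
    calc σ x * σ y * (σ (x * y))⁻¹ * (σ (x * y) * σ z * (σ (x * y * z))⁻¹)
        = σ x * (σ y * σ z * (σ (y * z))⁻¹) * (σ (y * z) * (σ (x * (y * z)))⁻¹) := by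
          rw [mul_assoc x]; group
      _ = σ y * σ z * (σ (y * z))⁻¹ * (σ x * σ (y * z) * (σ (x * (y * z)))⁻¹) := by
          rw [central]; simp only [mul_assoc]⟩
  map_one' := rfl
  map_mul' _ _ := rfl

theorem factorSet_eq_coboundary_mul {σ τ : Q → E} {hσ : ∀ x y, σ x * σ y * (σ (x * y))⁻¹ ∈ K}
    {hτ : ∀ x y, τ x * τ y * (τ (x * y))⁻¹ ∈ K} (k : Q → K) (hk : ∀ x, σ x = k x * τ x)
    (χ : K →* C) :
    factorSet hK σ hσ χ = coboundary Q C (χ ∘ k) * factorSet hK τ hτ χ := by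
  have defect (x y : Q) : (⟨_, hσ x y⟩ : K) = k x * k y / k (x * y) * ⟨_, hτ x y⟩ := by
    ext
    have central (κ : K) (g : E) : g * κ = κ * g := mem_center_iff.1 (hK κ.2) g
    simp only [hk, Subgroup.coe_mul, mul_inv_rev, div_eq_mul_inv]
    rw [← Subgroup.coe_inv]
    calc (k x : E) * τ x * (k y * τ y) * ((τ (x * y))⁻¹ * ((k (x * y))⁻¹ : K))
        = k x * (τ x * k y) * (τ y * ((τ (x * y))⁻¹ * ((k (x * y))⁻¹ : K))) := by
          simp only [mul_assoc]
      _ = k x * k y * (τ x * τ y * (τ (x * y))⁻¹ * ((k (x * y))⁻¹ : K)) := by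
          rw [central (k y) (τ x)]; simp only [mul_assoc]
      _ = k x * k y * ((k (x * y))⁻¹ : K) * (τ x * τ y * (τ (x * y))⁻¹) := by
          rw [central (k (x * y))⁻¹, ← mul_assoc]
  ext x y
  change χ _ = _
  rw [defect, map_mul, map_div, map_mul]
  rfl

end FactorSet

section CentralExtension

variable {G C : Type*} [Group G] [CommGroup C]

/-- The central extension `1 → C → E_f → G → 1` with underlying set `C × G` classified by the
cocycle `f`. As `f` need not be normalized, the identity is `((f 1 1)⁻¹, 1)`. -/
@[ext]
structure CentralExtension (f : TwoCocycle G C) where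
  scalar : C
  base : G

namespace CentralExtension

variable {f : TwoCocycle G C}

instance : Mul (CentralExtension f) :=
  ⟨fun a b => ⟨a.scalar * b.scalar * f a.base b.base, a.base * b.base⟩⟩

instance : One (CentralExtension f) := ⟨⟨(f 1 1)⁻¹, 1⟩⟩

instance : Inv (CentralExtension f) :=
  ⟨fun a => ⟨(f 1 1)⁻¹ * (f a.base⁻¹ a.base)⁻¹ * a.scalar⁻¹, a.base⁻¹⟩⟩

theorem mul_def (a b : CentralExtension f) :
    a * b = ⟨a.scalar * b.scalar * f a.base b.base, a.base * b.base⟩ := rfl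

theorem one_def : (1 : CentralExtension f) = ⟨(f 1 1)⁻¹, 1⟩ := rfl

theorem inv_def (a : CentralExtension f) :
    a⁻¹ = ⟨(f 1 1)⁻¹ * (f a.base⁻¹ a.base)⁻¹ * a.scalar⁻¹, a.base⁻¹⟩ := rfl

instance : Group (CentralExtension f) :=
  Group.ofLeftAxioms
    (fun a b c => by
      simp only [mul_def, mul_assoc a.base, CentralExtension.mk.injEq, and_true]
      calc a.scalar * b.scalar * f a.base b.base * c.scalar * f (a.base * b.base) c.base
          = a.scalar * b.scalar * c.scalar * (f a.base b.base * f (a.base * b.base) c.base) := by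
            simp only [mul_comm, mul_left_comm, mul_assoc]
        _ = a.scalar * (b.scalar * c.scalar * f b.base c.base) * f a.base (b.base * c.base) := by
            rw [f.2]; simp only [mul_assoc])
    (fun a => by ext <;> simp [mul_def, one_def, TwoCocycle.apply_one_left])
    (fun a => by ext <;> simp [mul_def, one_def, inv_def])

variable (f)

/-- The inclusion of the kernel of the central extension. -/
def kernelInclusion : C →* center (CentralExtension f) where
  toFun c := ⟨⟨c * (f 1 1)⁻¹, 1⟩, mem_center_iff.2 fun a => by
    ext <;> simp [mul_def, TwoCocycle.apply_one_left, TwoCocycle.apply_one_right, mul_comm]⟩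
  map_one' := by ext <;> simp [one_def]
  map_mul' a b := by ext <;> simp [mul_def, mul_assoc, mul_left_comm]

theorem kernelInclusion_injective : Function.Injective (kernelInclusion f) := fun _ _ h =>
  mul_right_cancel (congrArg (fun a => a.1.scalar) h)

/-- The projection of the central extension onto `G`. -/
def proj : CentralExtension f →* G where
  toFun := base
  map_one' := rfl
  map_mul' _ _ := rfl

/-- The set-theoretic section `G → E_f`, whose factor set is `f`. -/
def lift (x : G) : CentralExtension f := ⟨1, x⟩

@[simp]
theorem proj_lift (x : G) : proj f (lift f x) = x := rfl

theorem lift_mul_lift_mul_inv (x y : G) :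
    lift f x * lift f y * (lift f (x * y))⁻¹ = kernelInclusion f (f x y) := by
  rw [mul_inv_eq_iff_eq_mul]
  ext <;> simp [lift, kernelInclusion, mul_def, TwoCocycle.apply_one_left]

theorem lift_mul_lift_mul_inv_mem_center (x y : G) :
    lift f x * lift f y * (lift f (x * y))⁻¹ ∈ center (CentralExtension f) :=
  lift_mul_lift_mul_inv f x y ▸ (kernelInclusion f (f x y)).2

theorem factorSet_lift {r : center (CentralExtension f) →* C}
    (hr : ∀ c, r (kernelInclusion f c) = c) :
    factorSet le_rfl (lift f) (lift_mul_lift_mul_inv_mem_center f) r = f := by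
  ext x y
  refine (congrArg r (Subtype.ext ?_)).trans (hr (f x y))
  exact lift_mul_lift_mul_inv f x y

end CentralExtension

end CentralExtension

theorem exists_extension_of_divisibleBy {A B C : Type*} [CommGroup A] [CommGroup B] [CommGroup C]
    [DivisibleBy (Additive C) ℤ] {i : A →* B} (hi : Function.Injective i) (g : A →* C) :
    ∃ r : B →* C, ∀ a, r (i a) = g a := by
  obtain ⟨r, hr⟩ := (Module.Baer.of_divisible (Additive C)).extension_property_addMonoidHom
    i.toAdditive hi g.toAdditive
  exact ⟨MonoidHom.toAdditive.symm r, fun a => DFunLike.congr_fun hr (Additive.ofMul a)⟩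

section CommutatorPairing

variable {G C : Type*} [Group G] [CommGroup C]

/-- The commutator pairing of commuting elements `x` and `z`: for `c ∈ H²(G, C)` it is the
commutator of lifts of `x` and `z` to the central extension classified by `c`. -/
def commutatorPairing {x z : G} (h : Commute x z) : H2 G C →* C :=
  QuotientGroup.lift _
    { toFun f := f x z / f z x
      map_one' := div_self' 1
      map_mul' _ _ := mul_div_mul_comm _ _ _ _ } <| by
    rintro _ ⟨a, rfl⟩
    simp [h.eq, mul_comm (a x)]

@[simp]
theorem commutatorPairing_mk {x z : G} (h : Commute x z) (f : TwoCocycle G C) :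
    commutatorPairing h (f : H2 G C) = f x z / f z x := rfl

theorem commutatorPairing_symm {x z : G} (h : Commute x z) (c : H2 G C) :
    commutatorPairing h.symm c = (commutatorPairing h c)⁻¹ := by
  induction c using QuotientGroup.induction_on
  simp

theorem commutatorPairing_self (x : G) (c : H2 G C) : commutatorPairing (Commute.refl x) c = 1 := by
  induction c using QuotientGroup.induction_on
  simp

theorem commutatorPairing_mul_left {x y z : G} (hx : Commute x z) (hy : Commute y z)
    (c : H2 G C) :
    commutatorPairing (hx.mul_left hy) c = commutatorPairing hx c * commutatorPairing hy c := by
  induction c using QuotientGroup.induction_on with | H f => ?_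
  have hxyz := f.2 x y z
  have hzxy := f.2 z x y
  have hxzy := f.2 x z y
  rw [hy.eq] at hxyz
  rw [hx.eq] at hxzy
  rw [commutatorPairing_mk, commutatorPairing_mk, commutatorPairing_mk, div_mul_div_comm,
    div_eq_div_iff_mul_eq_mul]
  refine mul_left_cancel (a := f x y * f (z * x) y) ?_
  calc f x y * f (z * x) y * (f (x * y) z * (f z x * f z y))
      = f x y * f (x * y) z * (f z x * f (z * x) y) * f z y := by grind
    _ = f y z * f x (z * y) * (f x y * f z (x * y)) * f z y := by rw [hxyz, hzxy]
    _ = f x y * (f z y * f x (z * y)) * (f y z * f z (x * y)) := by grind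
    _ = f x y * f (z * x) y * (f x z * f y z * f z (x * y)) := by rw [← hxzy]; grind

theorem commutatorPairing_mul_right {x y z : G} (hx : Commute z x) (hy : Commute z y)
    (c : H2 G C) :
    commutatorPairing (hx.mul_right hy) c = commutatorPairing hx c * commutatorPairing hy c := by
  rw [commutatorPairing_symm (hx.symm.mul_left hy.symm),
    commutatorPairing_mul_left hx.symm hy.symm, mul_inv, ← commutatorPairing_symm,
    ← commutatorPairing_symm]

/-- The commutator pairing with a fixed `z`, as a homomorphism on the centralizer of `z`. -/
def centralizerPairing (c : H2 G C) (z : G) : centralizer {z} →* C :=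
  MonoidHom.mk' (fun x => commutatorPairing (mem_centralizer_singleton_iff.1 x.2) c)
    fun _ _ => commutatorPairing_mul_left _ _ c

theorem commutatorPairing_pow_eq_one {x z : G} (h : Commute x z) {n : ℕ} (hx : x ^ n = 1)
    (c : H2 G C) : commutatorPairing h c ^ n = 1 := by
  let x' : centralizer {z} := ⟨x, mem_centralizer_singleton_iff.2 h⟩
  have hx' : x' ^ n = 1 := Subtype.ext hx
  change centralizerPairing c z x' ^ n = 1
  rw [← map_pow, hx', map_one]

theorem commutatorPairing_commutatorElement {x y z : G}
    (hx : Commute x z) (hy : Commute y z) (h : Commute ⁅x, y⁆ z) (c : H2 G C) :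
    commutatorPairing h c = 1 := by
  let x' : centralizer {z} := ⟨x, mem_centralizer_singleton_iff.2 hx⟩
  let y' : centralizer {z} := ⟨y, mem_centralizer_singleton_iff.2 hy⟩
  change centralizerPairing c z ⁅x', y'⁆ = 1
  rw [map_commutatorElement, commutatorElement_eq_one_iff_mul_comm, mul_comm]

/-- The commutator pairing of `G` with a central subgroup `N`. -/
def pairing {N : Subgroup G} (hN : N ≤ center G) : H2 G C →* G →* N →* C :=
  have comm (g : G) (z : N) : Commute g z := mem_center_iff.1 (hN z.2) g
  MonoidHom.mk' (fun c => MonoidHom.mk' (fun g => MonoidHom.mk'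
      (fun z => commutatorPairing (comm g z) c)
      fun z w => commutatorPairing_mul_right (comm g z) (comm g w) c)
      fun g h => MonoidHom.ext fun z => commutatorPairing_mul_left (comm g z) (comm h z) c)
    fun c c' => by ext g z; exact map_mul (commutatorPairing (comm g z)) c c'

theorem pairing_apply {N : Subgroup G} (hN : N ≤ center G) (c : H2 G C) (g : G) (z : N) :
    pairing hN c g z = commutatorPairing (mem_center_iff.1 (hN z.2) g) c := rfl

end CommutatorPairing

section InflationRestriction

variable {G C : Type*} [Group G] [CommGroup C]

theorem CentralExtension.mem_center {f : TwoCocycle G C} {a : CentralExtension f}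
    (ha : a.base ∈ center G) (h : ∀ g, f g a.base = f a.base g) :
    a ∈ center (CentralExtension f) :=
  mem_center_iff.2 fun b => by
    ext
    · simp [mul_def, h, mul_comm]
    · exact mem_center_iff.1 ha b.base

theorem out_mul_out_mul_inv_mem (N : Subgroup G) [N.Normal] (x y : G ⧸ N) :
    x.out * y.out * (x * y).out⁻¹ ∈ N := by
  simp [← QuotientGroup.eq_one_iff]

theorem out_mk_mul_inv_mem (N : Subgroup G) [N.Normal] (x : G) :
    (x : G ⧸ N).out * x⁻¹ ∈ N := by
  simp [← QuotientGroup.eq_one_iff]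

theorem ker_pairing_le_range_inflation {N : Subgroup G} [N.Normal] [DivisibleBy (Additive C) ℤ]
    (hN : N ≤ center G) :
    (pairing hN : H2 G C →* _).ker ≤ (inflation (QuotientGroup.mk' N) : _ →* H2 G C).range := by
  intro c hc
  induction c using QuotientGroup.induction_on with | H f => ?_
  have symm (g z : G) (hz : z ∈ N) : f g z = f z g :=
    div_eq_one.1 (DFunLike.congr_fun (DFunLike.congr_fun hc g) ⟨z, hz⟩)
  have central (a : CentralExtension f) (ha : CentralExtension.proj f a ∈ N) :
      a ∈ center (CentralExtension f) :=
    CentralExtension.mem_center (hN ha) fun g => symm g _ ha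
  obtain ⟨r, hr⟩ := exists_extension_of_divisibleBy
    (CentralExtension.kernelInclusion_injective f) (MonoidHom.id C)
  let τ (q : G ⧸ N) : CentralExtension f := CentralExtension.lift f q.out
  have hτ (x y : G ⧸ N) : τ x * τ y * (τ (x * y))⁻¹ ∈ center (CentralExtension f) :=
    central _ (by simpa [τ] using out_mul_out_mul_inv_mem N x y)
  let k (x : G) : center (CentralExtension f) :=
    ⟨τ x * (CentralExtension.lift f x)⁻¹, central _ (by simpa [τ] using out_mk_mul_inv_mem N x)⟩
  have key := factorSet_eq_coboundary_mul le_rfl (σ := fun x : G => τ x)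
    (hσ := fun x y => hτ x y) (hτ := CentralExtension.lift_mul_lift_mul_inv_mem_center f) k
    (fun x => (inv_mul_cancel_right _ _).symm) r
  rw [CentralExtension.factorSet_lift f hr] at key
  refine ⟨factorSet le_rfl τ hτ r, ?_⟩
  calc inflation (QuotientGroup.mk' N) (factorSet le_rfl τ hτ r : H2 (G ⧸ N) C)
      = (coboundary G C (r ∘ k) * f : TwoCocycle G C) := congrArg _ key
    _ = (f : H2 G C) := QuotientGroup.eq.2 (by simp)

/-- The transgression `Hom(N, C) → H²(G ⧸ N, C)` of the central extension of `G ⧸ N` by `N`. -/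
noncomputable def transgression {N : Subgroup G} [N.Normal] (hN : N ≤ center G) :
    (N →* C) →* H2 (G ⧸ N) C :=
  (QuotientGroup.mk' _).comp (factorSet hN Quotient.out (out_mul_out_mul_inv_mem N))

theorem comap_factorSet_out {N : Subgroup G} [N.Normal] (hN : N ≤ center G) (χ : N →* C) :
    TwoCocycle.comap (QuotientGroup.mk' N)
        (factorSet hN (fun q : G ⧸ N => q.out) (out_mul_out_mul_inv_mem N) χ) =
      coboundary G C fun x => χ ⟨_, out_mk_mul_inv_mem N x⟩ := by
  have hid (x y : G) : x * y * (x * y)⁻¹ ∈ N := by simp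
  have factorSet_id : factorSet hN (fun x => x) hid χ = 1 := by
    ext x y
    exact (congrArg χ (Subtype.ext (mul_inv_cancel _))).trans (map_one χ)
  calc _ = coboundary G C _ * factorSet hN (fun x => x) hid χ :=
        factorSet_eq_coboundary_mul hN _ (fun x => (inv_mul_cancel_right _ _).symm) χ
    _ = _ := by rw [factorSet_id, mul_one]; rfl

theorem inflation_transgression {N : Subgroup G} [N.Normal] (hN : N ≤ center G) (χ : N →* C) :
    inflation (QuotientGroup.mk' N) (transgression hN χ) = 1 :=
  (QuotientGroup.eq_one_iff _).2 ⟨_, (comap_factorSet_out hN χ).symm⟩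

theorem transgression_injective {N : Subgroup G} [N.Normal] (hN : N ≤ center G)
    (hN' : N ≤ commutator G) :
    Function.Injective (transgression hN : (N →* C) →* H2 (G ⧸ N) C) := by
  refine (injective_iff_map_eq_one _).2 fun χ hχ => ?_
  obtain ⟨h, hh⟩ := (QuotientGroup.eq_one_iff _).1 hχ
  let k (x : G) : N := ⟨_, out_mk_mul_inv_mem N x⟩
  -- Both `h` and `χ ∘ k` trivialize the pulled back factor set, so they differ by a homomorphism.
  have mul (x y : G) : h (x * y : G) / χ (k (x * y)) = h x / χ (k x) * (h y / χ (k y)) := by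
    have := congrArg (fun f : TwoCocycle G C => f x y)
      ((congrArg (TwoCocycle.comap (QuotientGroup.mk' N)) hh).trans (comap_factorSet_out hN χ))
    change h x * h y / h (x * y : G) = χ (k x) * χ (k y) / χ (k (x * y)) at this
    rw [div_mul_div_comm, div_eq_div_iff_mul_eq_mul]
    rw [div_eq_div_iff_mul_eq_mul] at this
    grind
  let φ : G →* C := MonoidHom.mk' (fun x => h x / χ (k x)) mul
  ext z
  have hz : ((z : G) : G ⧸ N) = (1 : G) := (QuotientGroup.eq_one_iff _).2 z.2
  have hk : k z = k 1 / z := Subtype.ext (by simp [k, hz, div_eq_mul_inv])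
  calc χ z = φ 1 * χ z := by simp
    _ = φ z := by
      simp only [φ, MonoidHom.mk'_apply, hk, hz, map_div, div_div_eq_mul_div, div_mul_eq_mul_div]
    _ = 1 := Abelianization.commutator_subset_ker φ (hN' z.2)

end InflationRestriction

section Finiteness

theorem H2.pow_card_eq_one {G C : Type*} [Group G] [Finite G] [CommGroup C] (c : H2 G C) :
    c ^ Nat.card G = 1 := by
  have := Fintype.ofFinite G
  induction c using QuotientGroup.induction_on with | H f => ?_
  refine (QuotientGroup.eq_one_iff _).2 ⟨fun x => ∏ z, f x z, ?_⟩
  ext x y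
  rw [coboundary_apply, div_eq_iff_eq_mul]
  calc (∏ z, f x z) * ∏ z, f y z = ∏ z, f y z * f x (y * z) := by
        rw [Finset.prod_mul_distrib, mul_comm, ← Equiv.prod_comp (Equiv.mulLeft y) (f x)]
        rfl
    _ = ∏ z, f x y * f (x * y) z := Finset.prod_congr rfl fun z _ => (f.2 x y z).symm
    _ = f x y ^ Nat.card G * ∏ z, f (x * y) z := by
        rw [Finset.prod_mul_distrib, Finset.prod_const, Finset.card_univ, Nat.card_eq_fintype_card]

variable {K : Type*} [Field K]

noncomputable instance [IsAlgClosed K] : RootableBy Kˣ ℕ :=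
  rootableByOfPowLeftSurj _ _ fun {n} hn a => by
    obtain ⟨z, hz⟩ := IsAlgClosed.exists_pow_nat_eq (a : K) (Nat.pos_of_ne_zero hn)
    have hz0 : z ≠ 0 := by
      rintro rfl
      exact a.ne_zero (hz.symm.trans (zero_pow hn))
    exact ⟨Units.mk0 z hz0, Units.ext hz⟩

noncomputable instance [IsAlgClosed K] : DivisibleBy (Additive Kˣ) ℤ :=
  letI := divisibleByOfSMulRightSurj (Additive Kˣ) ℕ fun hn => RootableBy.surjective_pow Kˣ ℕ hn
  AddGroup.divisibleByIntOfDivisibleByNat _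

instance {G : Type*} [Group G] [Finite G] [IsAlgClosed K] : Finite (H2 G Kˣ) := by
  let n := Nat.card G
  have : NeZero n := ⟨Nat.card_pos.ne'⟩
  let torsion := {f : TwoCocycle G Kˣ // f ^ n = 1}
  have : Finite torsion :=
    Finite.of_injective (β := G → G → rootsOfUnity n K)
      (fun f x y => ⟨f.1 x y, congrArg (fun f : TwoCocycle G Kˣ => f x y) f.2⟩)
      fun f g h => Subtype.ext <| TwoCocycle.ext fun x y =>
        congrArg Subtype.val (congrFun₂ h x y)
  refine Finite.of_surjective (fun f : torsion => (f.1 : H2 G Kˣ)) fun c => ?_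
  induction c using QuotientGroup.induction_on with | H f => ?_
  obtain ⟨a, ha⟩ := (QuotientGroup.eq_one_iff _).1 (H2.pow_card_eq_one (f : H2 G Kˣ))
  let b (x : G) : Kˣ := RootableBy.root (a x) n
  have hb : b ^ n = a := funext fun x => RootableBy.root_cancel (a x) (NeZero.ne n)
  refine ⟨⟨(coboundary G Kˣ b)⁻¹ * f, ?_⟩, (QuotientGroup.eq.2 (by simp))⟩
  rw [mul_pow, inv_pow, ← map_pow, hb, ha, inv_mul_cancel]

end Finiteness

section Counting

variable {K : Type*} [Field K] [IsAlgClosed K] [CharZero K]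

theorem isMulCommutative_of_le_center {G : Type*} [Group G] {N : Subgroup G} (hN : N ≤ center G) :
    IsMulCommutative N :=
  ⟨⟨fun a b => Subtype.ext (mem_center_iff.1 (hN b.2) a)⟩⟩

theorem card_monoidHom_units {A : Type*} [Group A] [IsMulCommutative A] [Finite A] :
    Nat.card (A →* Kˣ) = Nat.card A :=
  CommGroup.card_monoidHom_of_hasEnoughRootsOfUnity A K

theorem card_H2_mul_card_le {G : Type*} [Group G] [Finite G] {N : Subgroup G} [N.Normal]
    (hN : N ≤ center G) (hN' : N ≤ commutator G) :
    Nat.card (H2 G Kˣ) * Nat.card N ≤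
      Nat.card (H2 (G ⧸ N) Kˣ) * Nat.card (pairing hN : H2 G Kˣ →* _).range := by
  let inf : H2 (G ⧸ N) Kˣ →* H2 G Kˣ := inflation (QuotientGroup.mk' N)
  let P : H2 G Kˣ →* G →* N →* Kˣ := pairing hN
  have card_N_le : Nat.card N ≤ Nat.card inf.ker := by
    have := isMulCommutative_of_le_center hN
    rw [← card_monoidHom_units (K := K)]
    exact Nat.card_le_card_of_injective
      (fun χ => (⟨transgression hN χ, inflation_transgression hN χ⟩ : inf.ker))
      fun _ _ h => transgression_injective hN hN' (congrArg Subtype.val h)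
  calc Nat.card (H2 G Kˣ) * Nat.card N = Nat.card P.ker * Nat.card P.range * Nat.card N := by
        rw [← P.ker.card_mul_index, index_ker]
    _ ≤ Nat.card inf.range * Nat.card P.range * Nat.card inf.ker := by
        gcongr
        exact Subgroup.card_le_of_le (ker_pairing_le_range_inflation hN)
    _ = Nat.card (H2 (G ⧸ N) Kˣ) * Nat.card P.range := by
        rw [← inf.ker.card_mul_index, index_ker]; ring

end Counting

section RangeBounds

theorem card_le_card_pow_of_closure_sup_eq_top {G X ι : Type*} [Group G] [CommGroup X] [Finite X]
    [Finite ι] {R : Subgroup (G →* X)} {L : Subgroup G} (hL : ∀ φ ∈ R, L ≤ φ.ker) {s : ι → G}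
    (hs : closure (Set.range s) ⊔ L = ⊤) : Nat.card R ≤ Nat.card X ^ Nat.card ι := by
  rw [← Nat.card_fun]
  refine Nat.card_le_card_of_injective (fun φ : R => φ.1 ∘ s) fun φ ψ h => Subtype.ext ?_
  have closure_le : closure (Set.range s) ≤ φ.1.eqLocus ψ.1 :=
    (closure_le _).2 <| Set.range_subset_iff.2 <| congrFun h
  have L_le : L ≤ φ.1.eqLocus ψ.1 := fun g hg => (hL _ φ.2 hg).trans (hL _ ψ.2 hg).symm
  ext g
  exact (hs ▸ sup_le closure_le L_le : ⊤ ≤ φ.1.eqLocus ψ.1) (mem_top g)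

theorem card_range_pairing_le_pow_rank {G K : Type*} [Group G] [Finite G] [Field K] [IsAlgClosed K]
    [CharZero K] {N : Subgroup G} (hN : N ≤ center G) :
    Nat.card (pairing hN : H2 G Kˣ →* _).range ≤ Nat.card N ^ Group.rank G := by
  have := isMulCommutative_of_le_center hN
  obtain ⟨S, hS, hcl⟩ := Group.rank_spec G
  have card_le := card_le_card_pow_of_closure_sup_eq_top
    (R := (pairing hN : H2 G Kˣ →* _).range) (L := ⊥)
    (fun φ _ => bot_le) (s := ((↑) : S → G)) (by simp [hcl])
  rwa [card_monoidHom_units, Nat.card_eq_fintype_card (α := S), Fintype.card_coe, hS] at card_le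

theorem commutatorElement_mul_left_of_le_center {G : Type*} [Group G]
    (hG : commutator G ≤ center G) (x y z : G) : ⁅x * y, z⁆ = ⁅x, z⁆ * ⁅y, z⁆ := by
  have central (g : G) : g * ⁅y, z⁆ = ⁅y, z⁆ * g :=
    mem_center_iff.1 (hG (commutator_mem_commutator (mem_top y) (mem_top z))) g
  rw [commutatorElement_mul_left_eq_conj_mul, central x, mul_inv_cancel_right, ← central]

theorem closure_pair_sup_centralizer_eq_top {G : Type*} [Group G] (hG : commutator G ≤ center G)
    {x y : G} (hxy : commutator G ≤ zpowers ⁅x, y⁆) :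
    closure {x, y} ⊔ centralizer {x, y} = ⊤ := by
  refine eq_top_iff.2 fun g _ => ?_
  let ad (z : G) : G →* G :=
    MonoidHom.mk' (fun g => ⁅g, z⁆) fun g h => commutatorElement_mul_left_of_le_center hG g h z
  have ad_mem (z : G) : ad z g ∈ zpowers ⁅x, y⁆ :=
    hxy (commutator_mem_commutator (mem_top g) (mem_top z))
  obtain ⟨i, hi⟩ := mem_zpowers_iff.1 (ad_mem x)
  obtain ⟨j, hj⟩ := mem_zpowers_iff.1 (ad_mem y)
  let u := y ^ i * x ^ (-j)
  have hu : u ∈ closure {x, y} :=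
    mul_mem (zpow_mem (subset_closure (by simp)) _) (zpow_mem (subset_closure (by simp)) _)
  have ad_x : ad x (g * u) = 1 := by
    have : ad x y = ⁅x, y⁆⁻¹ := (commutatorElement_inv x y).symm
    simp [u, this, ← hi, -commutatorElement_inv, show ad x x = 1 from commutatorElement_self x]
  have ad_y : ad y (g * u) = 1 := by
    have : ad y x = ⁅x, y⁆ := rfl
    simp [u, this, ← hj, show ad y y = 1 from commutatorElement_self y]
  have hgu : g * u ∈ centralizer {x, y} := by
    rw [mem_centralizer_iff]
    rintro _ (rfl | rfl)
    exacts [(commutatorElement_eq_one_iff_mul_comm.1 ad_x).symm,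
      (commutatorElement_eq_one_iff_mul_comm.1 ad_y).symm]
  rw [← mul_inv_cancel_right g u]
  exact mul_mem (mem_sup_right hgu) (mem_sup_left (inv_mem hu))

theorem card_range_pairing_commutator_le_sq {G K : Type*} [Group G] [Finite G] [Field K]
    [IsAlgClosed K] [CharZero K] (hG : commutator G ≤ center G) {x y : G}
    (hxy : commutator G ≤ zpowers ⁅x, y⁆) :
    Nat.card (pairing hG : H2 G Kˣ →* _).range ≤ Nat.card (commutator G) ^ 2 := by
  have := isMulCommutative_of_le_center hG
  have centralizer_le_ker (φ) (hφ : φ ∈ (pairing hG : H2 G Kˣ →* _).range) :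
      centralizer {x, y} ≤ φ.ker := by
    obtain ⟨c, rfl⟩ := hφ
    intro g hg
    ext w : 1
    obtain ⟨n, hn⟩ := mem_zpowers_iff.1 (hxy w.2)
    let z : commutator G := ⟨⁅x, y⁆, commutator_mem_commutator (mem_top x) (mem_top y)⟩
    obtain rfl : z ^ n = w := Subtype.ext hn
    have hz : pairing hG c g z = 1 := by
      have commute : Commute (z : G) g := (mem_center_iff.1 (hG z.2) g).symm
      rw [pairing_apply, commutatorPairing_symm commute, inv_eq_one]
      exact commutatorPairing_commutatorElement (mem_centralizer_iff.1 hg x (by simp))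
        (mem_centralizer_iff.1 hg y (by simp)) _ c
    rw [map_zpow, hz, one_zpow, MonoidHom.one_apply]
  have card_le := card_le_card_pow_of_closure_sup_eq_top centralizer_le_ker (s := ![x, y])
    (by simpa [Set.pair_comm y x] using closure_pair_sup_centralizer_eq_top hG hxy)
  rwa [card_monoidHom_units, Nat.card_fin] at card_le

end RangeBounds

section Abelian

theorem H2.ext_of_commutatorPairing {A C ι : Type*} [CommGroup A] [CommGroup C]
    [DivisibleBy (Additive C) ℤ] {e : ι → A} (he : closure (Set.range e) = ⊤) (r : ι → ι → Prop)
    [Std.Trichotomous r] {c c' : H2 A C}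
    (h : ∀ i j, r i j → commutatorPairing (Commute.all (e i) (e j)) c =
      commutatorPairing (Commute.all (e i) (e j)) c') : c = c' := by
  have eq_on_pairs (i j : ι) : commutatorPairing (Commute.all (e i) (e j)) c =
      commutatorPairing (Commute.all (e i) (e j)) c' := by
    rcases trichotomous_of r i j with hij | rfl | hij
    · exact h i j hij
    · rw [commutatorPairing_self, commutatorPairing_self]
    · rw [commutatorPairing_symm (Commute.all (e j) (e i)), h j i hij, ← commutatorPairing_symm]
  have hN : (⊤ : Subgroup A) ≤ center A := CommGroup.center_eq_top.ge
  have pairing_injective : Function.Injective (pairing hN : H2 A C →* _) := by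
    have := QuotientGroup.subsingleton_quotient_top (G := A)
    rw [← MonoidHom.ker_eq_bot_iff, eq_bot_iff]
    refine (ker_pairing_le_range_inflation hN).trans ?_
    rintro _ ⟨b, rfl⟩
    rw [Subsingleton.elim b 1]
    exact map_one _
  refine pairing_injective (MonoidHom.eq_of_eqOn_dense he (Set.forall_mem_range.2 fun i => ?_))
  have eq_on_generators : (pairing hN c (e i)).comp topEquiv.symm.toMonoidHom =
      (pairing hN c' (e i)).comp topEquiv.symm.toMonoidHom :=
    MonoidHom.eq_of_eqOn_dense he (Set.forall_mem_range.2 (eq_on_pairs i))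
  exact MonoidHom.ext fun z => DFunLike.congr_fun eq_on_generators (z : A)

variable {K : Type*} [Field K] [IsAlgClosed K] [CharZero K]

theorem card_H2_sq_mul_prod_le {A ι : Type*} [CommGroup A] [Fintype ι] {e : ι → A}
    (he : closure (Set.range e) = ⊤) {n : ι → ℕ} [∀ i, NeZero (n i)] (hen : ∀ i, e i ^ n i = 1) :
    Nat.card (H2 A Kˣ) ^ 2 * ∏ i, n i ≤ (∏ i, n i) ^ Fintype.card ι := by
  let _ : LinearOrder ι := LinearOrder.lift' _ (Fintype.equivFin ι).injective
  let μ (i : ι) := rootsOfUnity (n i) K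
  have card_μ (i : ι) : Nat.card (μ i) = n i := HasEnoughRootsOfUnity.natCard_rootsOfUnity K (n i)
  let θ (c : H2 A Kˣ) (i j : ι) : μ i :=
    ⟨commutatorPairing (Commute.all (e i) (e j)) c, commutatorPairing_pow_eq_one _ (hen i) c⟩
  -- One class fills the entries above the diagonal, the other those below it.
  let F (t : H2 A Kˣ × H2 A Kˣ × ∀ i, μ i) (i j : ι) : μ i :=
    if i < j then θ t.1 i j else if j < i then θ t.2.1 i j else t.2.2 i
  have F_injective : Function.Injective F := by
    rintro ⟨c, c', d⟩ ⟨b, b', d'⟩ h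
    have entry (i j : ι) := congrFun₂ h i j
    obtain rfl : c = b := H2.ext_of_commutatorPairing he (· < ·) fun i j hij =>
      congrArg Subtype.val (by simpa [F, hij] using entry i j : θ c i j = θ b i j)
    obtain rfl : c' = b' := H2.ext_of_commutatorPairing he (· > ·) fun i j hij =>
      congrArg Subtype.val (by simpa [F, hij, hij.not_gt] using entry i j : θ c' i j = θ b' i j)
    obtain rfl : d = d' := funext fun i => by simpa [F] using entry i i
    rfl
  calc Nat.card (H2 A Kˣ) ^ 2 * ∏ i, n i
      = Nat.card (H2 A Kˣ × H2 A Kˣ × ∀ i, μ i) := by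
        simp only [Nat.card_prod, Nat.card_pi, card_μ, sq, mul_assoc]
    _ ≤ Nat.card (∀ i, ι → μ i) := Nat.card_le_card_of_injective F F_injective
    _ = (∏ i, n i) ^ Fintype.card ι := by
        simp only [Nat.card_pi, card_μ, Finset.prod_const, Finset.card_univ, Finset.prod_pow]

theorem card_le_rank_pi_zmod {ι : Type*} [Fintype ι] {p : ℕ} [hp : Fact p.Prime] {n : ι → ℕ}
    (hn : ∀ i, p ∣ n i) [Group.FG (∀ i, Multiplicative (ZMod (n i)))] :
    Fintype.card ι ≤ Group.rank (∀ i, Multiplicative (ZMod (n i))) := by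
  have : NeZero p := ⟨hp.out.ne_zero⟩
  let q : (∀ i, Multiplicative (ZMod (n i))) →* (ι → Multiplicative (ZMod p)) :=
    MonoidHom.piMap fun i => (ZMod.castHom (hn i) (ZMod p)).toAddMonoidHom.toMultiplicative
  have q_surjective : Function.Surjective q :=
    Function.Surjective.piMap fun i => ZMod.castHom_surjective (hn i)
  have pow_p (g : ι → Multiplicative (ZMod p)) : g ^ p = 1 :=
    funext fun i => ZModModule.char_nsmul_eq_zero p (g i).toAdd
  have card_dvd := card_dvd_exponent_pow_rank' _ pow_p
  rw [Nat.card_fun, Nat.card_eq_fintype_card, Nat.card_eq_fintype_card, Fintype.card_multiplicative,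
    ZMod.card, Nat.pow_dvd_pow_iff_le_right hp.out.one_lt] at card_dvd
  exact card_dvd.trans (Group.rank_le_of_surjective q q_surjective)

theorem closure_range_mulSingle_ofAdd_one {ι : Type*} [Finite ι] [DecidableEq ι] (n : ι → ℕ) :
    Subgroup.closure (Set.range fun i =>
      (Pi.mulSingle i (Multiplicative.ofAdd 1) : ∀ i, Multiplicative (ZMod (n i)))) = ⊤ := by
  refine eq_top_iff.2 fun x _ => pi_mem_of_mulSingle_mem x fun i => ?_
  obtain ⟨k, hk⟩ := ZMod.intCast_surjective (x i).toAdd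
  have hx : x i = Multiplicative.ofAdd 1 ^ k := by
    rw [← ofAdd_zsmul, zsmul_one, hk, ofAdd_toAdd]
  rw [hx, Pi.mulSingle_zpow]
  exact zpow_mem (subset_closure (Set.mem_range_self i)) k

theorem card_H2_sq_mul_card_le_pow_rank {A : Type*} [CommGroup A] [Finite A] {p : ℕ}
    [Fact p.Prime] (hA : IsPGroup p A) :
    Nat.card (H2 A Kˣ) ^ 2 * Nat.card A ≤ Nat.card A ^ Group.rank A := by
  classical
  obtain ⟨ι, _, n, hn, ⟨E⟩⟩ := CommGroup.equiv_prod_multiplicative_zmod_of_finite A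
  have (i : ι) : NeZero (n i) := ⟨(zero_lt_one.trans (hn i)).ne'⟩
  have card_zmod (m : ℕ) : Nat.card (Multiplicative (ZMod m)) = m := Nat.card_zmod m
  have card_A : Nat.card A = ∏ i, n i := by
    simp_rw [Nat.card_congr E.toEquiv, Nat.card_pi, card_zmod]
  have p_dvd (i : ι) : p ∣ n i := by
    have hi : IsPGroup p (Multiplicative (ZMod (n i))) :=
      hA.of_surjective ((Pi.evalMonoidHom _ i).comp E.toMonoidHom)
        ((Function.surjective_eval i).comp E.surjective)
    have := hi.card_eq_or_dvd
    rw [card_zmod] at this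
    exact this.resolve_left (hn i).ne'
  let e (i : ι) : A := E.symm (Pi.mulSingle i (Multiplicative.ofAdd 1))
  have closure_e : closure (Set.range e) = ⊤ := by
    have := congrArg (map E.symm.toMonoidHom) (closure_range_mulSingle_ofAdd_one n)
    rwa [MonoidHom.map_closure, ← Set.range_comp, map_top_of_surjective _ E.symm.surjective] at this
  have e_pow (i : ι) : e i ^ n i = 1 := by
    rw [← map_pow, ← Pi.mulSingle_pow, ← ofAdd_nsmul]
    simp
  calc Nat.card (H2 A Kˣ) ^ 2 * Nat.card A
      ≤ Nat.card A ^ Fintype.card ι := by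
        rw [card_A]
        exact card_H2_sq_mul_prod_le closure_e e_pow
    _ ≤ Nat.card A ^ Group.rank A := by
        gcongr
        · exact Nat.card_pos
        · exact (card_le_rank_pi_zmod p_dvd).trans
            (Group.rank_le_of_surjective E.toMonoidHom E.surjective)

end Abelian

section PGroup

theorem commutator_ne_bot {G : Type*} [Group G] (h : ∃ a b : G, a * b ≠ b * a) :
    commutator G ≠ ⊥ := by
  obtain ⟨a, b, hab⟩ := h
  refine fun hbot => hab (commutatorElement_eq_one_iff_mul_comm.1 (mem_bot.1 ?_))
  exact hbot ▸ commutator_mem_commutator (mem_top a) (mem_top b)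

theorem normal_of_le_center {G : Type*} [Group G] {N : Subgroup G} (hN : N ≤ center G) :
    N.Normal :=
  ⟨fun z hz g => by rwa [mem_center_iff.1 (hN hz) g, mul_inv_cancel_right]⟩

theorem exists_le_center_card_eq {G : Type*} [Group G] [Finite G] {p : ℕ} [Fact p.Prime]
    (hG : IsPGroup p G) {H : Subgroup G} [H.Normal] (hH : H ≠ ⊥) :
    ∃ N ≤ H, N ≤ center G ∧ Nat.card N = p := by
  have p_dvd : p ∣ Nat.card H :=
    (hG.to_subgroup H).card_eq_or_dvd.resolve_left (mt card_eq_one.1 hH)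
  have hG' : IsPGroup p (ConjAct G) := hG.of_equiv ConjAct.toConjAct
  obtain ⟨b, hb, hb1⟩ :=
    hG'.exists_fixed_point_of_prime_dvd_card_of_fixed_point H p_dvd (a := 1) smul_one
  have b_mem_center : (b : G) ∈ center G := by
    rw [mem_center_iff]
    exact fun g => mul_inv_eq_iff_eq_mul.1 (congrArg Subtype.val (hb (ConjAct.toConjAct g)))
  have p_dvd_inf : p ∣ Nat.card (H ⊓ center G : Subgroup G) := by
    refine (hG.to_subgroup _).card_eq_or_dvd.resolve_left fun h => hb1 ?_
    have : (b : G) ∈ H ⊓ center G := ⟨b.2, b_mem_center⟩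
    rw [card_eq_one.1 h] at this
    exact Subtype.ext (mem_bot.1 this).symm
  obtain ⟨c, hc⟩ := exists_prime_orderOf_dvd_card' p p_dvd_inf
  refine ⟨zpowers c.1, zpowers_le.2 c.2.1, zpowers_le.2 c.2.2, ?_⟩
  rw [Nat.card_zpowers, Subgroup.orderOf_coe, hc]

theorem exists_commutator_le_zpowers {G : Type*} [Group G]
    (h : (Nat.card (commutator G)).Prime) : ∃ x y : G, commutator G ≤ zpowers ⁅x, y⁆ := by
  have : Fact (Nat.card (commutator G)).Prime := ⟨h⟩
  have ne_bot : commutator G ≠ ⊥ := fun hbot => h.one_lt.ne' (card_eq_one.2 hbot)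
  obtain ⟨x, y, hxy⟩ : ∃ x y : G, ⁅x, y⁆ ≠ 1 := by
    contrapose! ne_bot
    exact eq_bot_iff.2 (commutator_le.2 fun x _ y _ => ne_bot x y)
  let z : commutator G := ⟨⁅x, y⁆, commutator_mem_commutator (mem_top x) (mem_top y)⟩
  have hz : zpowers z = ⊤ := zpowers_eq_top_of_prime_card rfl fun h => hxy (congrArg Subtype.val h)
  refine ⟨x, y, fun w hw => ?_⟩
  obtain ⟨n, hn⟩ := mem_zpowers_iff.1 (hz ▸ mem_top (⟨w, hw⟩ : commutator G))
  exact mem_zpowers_iff.2 ⟨n, congrArg Subtype.val hn⟩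

theorem card_commutator_quotient_mul_card {G : Type*} [Group G] {N : Subgroup G} [N.Normal]
    (hN : N ≤ commutator G) :
    Nat.card (commutator (G ⧸ N)) * Nat.card N = Nat.card (commutator G) := by
  have map_eq : (commutator G).map (QuotientGroup.mk' N) = commutator (G ⧸ N) := by
    rw [commutator_def, map_commutator, map_top_of_surjective _ (QuotientGroup.mk'_surjective N)]
    rfl
  rw [← map_eq, ← relIndex_ker, QuotientGroup.ker_mk', mul_comm, ← relIndex_bot_left N,
    relIndex_mul_relIndex ⊥ N _ bot_le hN, relIndex_bot_left]

variable {K : Type*} [Field K] [IsAlgClosed K] [CharZero K]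

theorem card_H2_mul_card_le_mul_pow_rank {G : Type*} [Group G] [Finite G] {N : Subgroup G}
    [N.Normal] (hN : N ≤ center G) (hN' : N ≤ commutator G) :
    Nat.card (H2 G Kˣ) * Nat.card N ≤
      Nat.card (H2 (G ⧸ N) Kˣ) * Nat.card N ^ Group.rank G :=
  (card_H2_mul_card_le hN hN').trans (Nat.mul_le_mul_left _ (card_range_pairing_le_pow_rank hN))

theorem card_H2_le_mul_of_prime_card_commutator {G : Type*} [Group G] [Finite G]
    (hG : commutator G ≤ center G) (h : (Nat.card (commutator G)).Prime) :
    Nat.card (H2 G Kˣ) ≤ Nat.card (H2 (Abelianization G) Kˣ) * Nat.card (commutator G) := by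
  obtain ⟨x, y, hxy⟩ := exists_commutator_le_zpowers h
  refine Nat.le_of_mul_le_mul_right ?_ h.pos
  calc Nat.card (H2 G Kˣ) * Nat.card (commutator G)
      ≤ Nat.card (H2 (Abelianization G) Kˣ) * Nat.card (pairing hG : H2 G Kˣ →* _).range :=
        card_H2_mul_card_le hG le_rfl
    _ ≤ Nat.card (H2 (Abelianization G) Kˣ) * Nat.card (commutator G) ^ 2 := by
        gcongr
        exact card_range_pairing_commutator_le_sq hG hxy
    _ = _ := by ring

theorem card_H2_sq_mul_le_of_card_commutator_eq {p : ℕ} [hp : Fact p.Prime] {d : ℕ} {G : Type*}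
    [Group G] [Finite G] (hG : IsPGroup p G) (hp' : Nat.card (commutator G) = p)
    (hd : Group.rank G ≤ d) :
    Nat.card (H2 G Kˣ) ^ 2 * p ^ (2 * d) * (Nat.card G * p) ≤ p ^ 4 * (Nat.card G * p) ^ d := by
  have commutator_le_center : commutator G ≤ center G := by
    have ne_bot : commutator G ≠ ⊥ := mt card_eq_one.2 (hp' ▸ hp.out.ne_one)
    obtain ⟨N, hN, hNc, hNp⟩ := exists_le_center_card_eq hG ne_bot
    exact eq_of_le_of_card_ge hN (hp'.trans hNp.symm).le ▸ hNc
  have card_le := card_H2_le_mul_of_prime_card_commutator (K := K) commutator_le_center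
    (hp'.symm ▸ hp.out)
  have card_G : Nat.card G = Nat.card (Abelianization G) * p :=
    hp' ▸ card_eq_card_quotient_mul_card_subgroup (commutator G)
  have rank_le : Group.rank (Abelianization G) ≤ d :=
    (Group.rank_le_of_surjective _ (QuotientGroup.mk'_surjective (commutator G))).trans hd
  have abelian_bound : Nat.card (H2 (Abelianization G) Kˣ) ^ 2 * Nat.card (Abelianization G) ≤
      Nat.card (Abelianization G) ^ d :=
    (card_H2_sq_mul_card_le_pow_rank (hG.to_quotient _)).trans
      (Nat.pow_le_pow_right Nat.card_pos rank_le)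
  rw [hp'] at card_le
  generalize Nat.card (H2 (Abelianization G) Kˣ) = m, Nat.card (Abelianization G) = a at *
  calc Nat.card (H2 G Kˣ) ^ 2 * p ^ (2 * d) * (Nat.card G * p)
      ≤ (m * p) ^ 2 * p ^ (2 * d) * (a * p * p) := by rw [card_G]; gcongr
    _ = p ^ 4 * (m ^ 2 * a) * p ^ (2 * d) := by ring
    _ ≤ p ^ 4 * a ^ d * p ^ (2 * d) := by gcongr
    _ = p ^ 4 * (Nat.card G * p) ^ d := by rw [card_G]; ring

theorem card_H2_sq_mul_le {p : ℕ} [hp : Fact p.Prime] {d k : ℕ} {G : Type*} [Group G] [Finite G]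
    (hG : IsPGroup p G) (hk : Nat.card (commutator G) = p ^ (k + 1)) (hd : Group.rank G ≤ d) :
    Nat.card (H2 G Kˣ) ^ 2 * p ^ (2 * d) * (Nat.card G * Nat.card (commutator G)) ≤
      p ^ 4 * (Nat.card G * Nat.card (commutator G)) ^ d := by
  induction k generalizing G with
  | zero =>
    rw [zero_add, pow_one] at hk
    rw [hk]
    exact card_H2_sq_mul_le_of_card_commutator_eq hG hk hd
  | succ k ih =>
    have ne_bot : commutator G ≠ ⊥ :=
      mt card_eq_one.2 (hk ▸ (Nat.one_lt_pow k.succ.succ_ne_zero hp.out.one_lt).ne')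
    obtain ⟨N, hN', hN, hNp⟩ := exists_le_center_card_eq hG ne_bot
    have := normal_of_le_center hN
    have card_G := card_eq_card_quotient_mul_card_subgroup N
    have card_G' := card_commutator_quotient_mul_card hN'
    have card_quotient' : Nat.card (commutator (G ⧸ N)) = p ^ (k + 1) :=
      Nat.eq_of_mul_eq_mul_right hp.out.pos (by rw [← hNp, card_G', hk, hNp, pow_succ])
    have rank_le : Group.rank (G ⧸ N) ≤ d :=
      (Group.rank_le_of_surjective _ (QuotientGroup.mk'_surjective N)).trans hd
    have quotient_bound := ih (hG.to_quotient N) card_quotient' rank_le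
    have card_H2_le : Nat.card (H2 G Kˣ) * p ≤ Nat.card (H2 (G ⧸ N) Kˣ) * p ^ d := by
      refine (hNp ▸ card_H2_mul_card_le_mul_pow_rank hN hN').trans ?_
      gcongr
      exact hp.out.one_le
    rw [← card_G', card_G, hNp]
    generalize Nat.card (H2 (G ⧸ N) Kˣ) = m, Nat.card (G ⧸ N) = a,
      Nat.card (commutator (G ⧸ N)) = b at *
    calc Nat.card (H2 G Kˣ) ^ 2 * p ^ (2 * d) * (a * p * (b * p))
        = (Nat.card (H2 G Kˣ) * p) ^ 2 * p ^ (2 * d) * (a * b) := by ring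
      _ ≤ (m * p ^ d) ^ 2 * p ^ (2 * d) * (a * b) := by gcongr
      _ = m ^ 2 * p ^ (2 * d) * (a * b) * p ^ (2 * d) := by ring
      _ ≤ p ^ 4 * (a * b) ^ d * p ^ (2 * d) := by gcongr
      _ = p ^ 4 * (a * p * (b * p)) ^ d := by ring

end PGroup

end SchurMultiplier

/-- The bound derived in [Rai] from Ellis–Wiegold: for a non-abelian finite `p`-group of
order `p ^ n` with `|γ₂(G)| = p ^ k` and `d(G) = d`,
`|M(G)| ≤ p ^ ((d - 1) * (n + k) / 2 - (d - 2))`. -/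
theorem schur_multiplier_bound_rai (p n k d : ℕ) (hp : p.Prime)
    (G : Type) [Group G] [Finite G]
    (hcard : Nat.card G = p ^ n)
    (hna : ∃ a b : G, a * b ≠ b * a)
    (hk : Nat.card (commutator G) = p ^ k)
    (hd : Group.rank G = d) :
    (Nat.card (schurMultiplier G) : ℝ) ≤
      (p : ℝ) ^ (((d : ℝ) - 1) * ((n : ℝ) + (k : ℝ)) / 2 - ((d : ℝ) - 2)) := by
  have : Fact p.Prime := ⟨hp⟩
  obtain ⟨k, rfl⟩ : ∃ l, k = l + 1 := by
    refine Nat.exists_eq_succ_of_ne_zero ?_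
    rintro rfl
    exact SchurMultiplier.commutator_ne_bot hna (Subgroup.card_eq_one.1 hk)
  have bound := SchurMultiplier.card_H2_sq_mul_le (K := ℂ) (IsPGroup.of_card hcard) hk hd.le
  rw [← SchurMultiplier.card_schurMultiplier, hcard, hk] at bound
  have hp0 : (0 : ℝ) < p := mod_cast hp.pos
  have bound' : (Nat.card (schurMultiplier G) : ℝ) ^ 2 * (p : ℝ) ^ (2 * d + (n + (k + 1))) ≤
      (p : ℝ) ^ (4 + (n + (k + 1)) * d) := by
    rw [pow_add, pow_add _ 4, pow_mul _ (n + (k + 1)) d, pow_add _ n, ← mul_assoc]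
    exact_mod_cast bound
  refine le_of_sq_le_sq (le_of_mul_le_mul_right (bound'.trans_eq ?_) (pow_pos hp0 _))
    (Real.rpow_pos_of_pos hp0 _).le
  rw [← Real.rpow_natCast, ← Real.rpow_natCast, ← Real.rpow_natCast, ← Real.rpow_mul hp0.le,
    ← Real.rpow_add hp0]
  congr 1
  push_cast
  ring
end
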